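/- arXiv:math/0305184 — 10 statements merged into one kernel-verified Lean document; each statement's English description precedes it below -/
import Mathlib

section
/- Let a, b, a', b' be nonzero complex numbers satisfying a + b + a' + b' = 0 and (a·a')/(b·b') = −1. Define a* = 1/conj(a), a'* = 1/conj(a'), b* = −1/conj(b), b'* = −1/conj(b'). Then a* + b* + a'* + b'* = 0 and (a*·a'*)/(b*·b'*) = −1. -/
/-!
Conjugating the hypotheses gives nonzero `A, B, A', B'` with `A + B + A' + B' = 0` and
`A * A' = -(B * B')`. Pairing opposite sides, the dual sum is
`(A + A') / (A * A') - (B + B') / (B * B') = (A + A' + B + B') / (A * A') = 0`, and the dual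
cross-ratio is the inverse of the conjugated cross-ratio, hence again `-1`.
-/

/-- **Lemma underlying the Christoffel dualization of conformal squares.**
If `a, b, a', b'` are nonzero complex numbers with `a + b + a' + b' = 0` and
`(a·a')/(b·b') = -1`, then the dual sides `a* = 1/conj a`, `a'* = 1/conj a'`,
`b* = -1/conj b`, `b'* = -1/conj b'` satisfy `a* + b* + a'* + b'* = 0` and
`(a*·a'*)/(b*·b'*) = -1`. -/
theorem dual_conformal_square (a b a' b' : ℂ)
    (ha : a ≠ 0) (hb : b ≠ 0) (ha' : a' ≠ 0) (hb' : b' ≠ 0)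
    (hsum : a + b + a' + b' = 0)
    (hcr : a * a' / (b * b') = -1) :
    (1 / (starRingEnd ℂ) a) + (-(1 / (starRingEnd ℂ) b)) + (1 / (starRingEnd ℂ) a')
        + (-(1 / (starRingEnd ℂ) b')) = 0 ∧
    ((1 / (starRingEnd ℂ) a) * (1 / (starRingEnd ℂ) a')) /
        ((-(1 / (starRingEnd ℂ) b)) * (-(1 / (starRingEnd ℂ) b'))) = -1 := by
  have hmul : a * a' = -(b * b') := by
    rw [div_eq_iff (mul_ne_zero hb hb')] at hcr
    linear_combination hcr
  have hsum_conj := congrArg (starRingEnd ℂ) hsum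
  have hmul_conj := congrArg (starRingEnd ℂ) hmul
  simp only [map_add, map_mul, map_neg, map_zero] at hsum_conj hmul_conj
  have hA := (map_ne_zero (starRingEnd ℂ)).mpr ha
  have hB := (map_ne_zero (starRingEnd ℂ)).mpr hb
  have hA' := (map_ne_zero (starRingEnd ℂ)).mpr ha'
  have hB' := (map_ne_zero (starRingEnd ℂ)).mpr hb'
  generalize (starRingEnd ℂ) a = A at *
  generalize (starRingEnd ℂ) b = B at *
  generalize (starRingEnd ℂ) a' = A' at *
  generalize (starRingEnd ℂ) b' = B' at *
  constructor
  -- Since `A * A' = -(B * B')`, the dual sum is `(A + A' + B + B') / (A * A')`.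
  · have key : 1 / A + -(1 / B) + 1 / A' + -(1 / B')
        = ((A + A') * (B * B') - (B + B') * (A * A')) / (A * A' * (B * B')) := by
      field_simp
      ring
    rw [key, div_eq_zero_iff]
    left
    linear_combination (B * B') * hsum_conj - (B + B') * hmul_conj
  -- The dual cross-ratio is the inverse of the conjugated one.
  · have key : 1 / A * (1 / A') / (-(1 / B) * -(1 / B')) = B * B' / (A * A') := by
      field_simp
    rw [key, div_eq_iff (mul_ne_zero hA hA')]
    linear_combination hmul_conj
end

section
/- Let f : ℤ² → ℂ be such that any two values at adjacent lattice points are distinct and every elementary quadrilateral has cross-ratio −1, i.e. for all (m,n) ∈ ℤ²: (f(m,n) − f(m+1,n))·(f(m+1,n+1) − f(m,n+1)) / ((f(m+1,n) − f(m+1,n+1))·(f(m,n+1) − f(m,n))) = −1. Then there exists f* : ℤ² → ℂ such that for all (m,n): f*(m+1,n) − f*(m,n) = 1/conj(f(m+1,n) − f(m,n)) and f*(m,n+1) − f*(m,n) = −1/conj(f(m,n+1) − f(m,n)); moreover every elementary quadrilateral of f* also has cross-ratio −1. -/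
/-!
The prescribed edges of the dual form a discrete one-form on `ℤ²`, and such a form is the difference
of a function as soon as it is closed around every elementary quadrilateral
(`exists_discrete_potential`). If `a`, `b`, `c`, `d` are the bottom, right, top and left edges of a
quadrilateral of `f`, then `a + b = d + c`, and cross-ratio `-1` says `a * c = -(b * d)`. These two
relations give `1 / a - 1 / b = -(1 / d) + 1 / c` (`dual_edges_closed`), and conjugating yields the
closedness. Since the cross-ratio is `a * c / (b * d)` in terms of edges, the dual has cross-ratio
the conjugate of the inverse of `-1`, which is again `-1`.
-/

/-- Every function on `ℤ` is the forward difference of some function. -/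
lemma exists_antidifference (p : ℤ → ℂ) : ∃ S : ℤ → ℂ, ∀ n, S (n + 1) - S n = p n := by
  -- For each `n` at most one of the two sums is nonempty.
  refine ⟨fun n => ∑ i ∈ Finset.range n.toNat, p i -
    ∑ i ∈ Finset.range (-n).toNat, p (-(i + 1)), fun n => ?_⟩
  rcases le_or_gt 0 n with h | h
  · obtain ⟨k, rfl⟩ := Int.eq_ofNat_of_zero_le h
    have h1 : ((k : ℤ) + 1).toNat = k + 1 := by omega
    have h2 : (-((k : ℤ) + 1)).toNat = 0 := by omega
    have h3 : (-(k : ℤ)).toNat = 0 := by omega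
    simp only [h1, h2, h3, Int.toNat_natCast, Finset.sum_range_succ, Finset.range_zero,
      Finset.sum_empty]
    ring
  · obtain ⟨k, rfl⟩ : ∃ k : ℕ, n = -((k : ℤ) + 1) := ⟨(-n - 1).toNat, by omega⟩
    have h1 : (-((k : ℤ) + 1) + 1).toNat = 0 := by omega
    have h2 : (-(-((k : ℤ) + 1) + 1)).toNat = k := by omega
    have h3 : (-((k : ℤ) + 1)).toNat = 0 := by omega
    have h4 : (-(-((k : ℤ) + 1))).toNat = k + 1 := by omega
    simp only [h1, h2, h3, h4, Finset.sum_range_succ, Finset.range_zero, Finset.sum_empty]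
    ring

/-- A closed discrete one-form on `ℤ²`, with values `h` on horizontal and `v` on vertical edges,
is exact. -/
lemma exists_discrete_potential (h v : ℤ → ℤ → ℂ)
    (hc : ∀ m n, h m n + v (m + 1) n = v m n + h m (n + 1)) :
    ∃ g : ℤ → ℤ → ℂ, (∀ m n, g (m + 1) n - g m n = h m n) ∧
      (∀ m n, g m (n + 1) - g m n = v m n) := by
  choose S hS using exists_antidifference
  -- Sum `h` along the row `n = 0`, then `v` up the column over `m`.
  let g : ℤ → ℤ → ℂ := fun m n => S (fun k => h k 0) m + (S (v m) n - S (v m) 0)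
  have hv : ∀ m n, g m (n + 1) - g m n = v m n := by
    intro m n
    have := hS (v m) n
    simp only [g]
    linear_combination this
  refine ⟨g, fun m n => ?_, hv⟩
  induction n using Int.induction_on with
  | zero =>
    have := hS (fun k => h k 0) m
    simp only [g]
    linear_combination this
  | succ i ih => linear_combination ih + hv (m + 1) i - hv m i + hc m i
  | pred i ih =>
    have h1 := hv (m + 1) (-(i : ℤ) - 1)
    have h2 := hv m (-(i : ℤ) - 1)
    have h3 := hc m (-(i : ℤ) - 1)
    rw [sub_add_cancel] at h1 h2 h3
    linear_combination ih - h1 + h2 - h3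

/-- For a closed quadrilateral with bottom, right, top and left edges `a`, `b`, `c`, `d` and
cross-ratio `-1`, the edges `1 / a`, `-(1 / b)`, `1 / c`, `-(1 / d)` also close up. -/
lemma dual_edges_closed {a b c d : ℂ} (ha : a ≠ 0) (hb : b ≠ 0) (hc : c ≠ 0) (hd : d ≠ 0)
    (hsum : a + b = d + c) (hcr : a * c = -(b * d)) :
    1 / a + -(1 / b) = -(1 / d) + 1 / c := by
  have key : b * c * (a + d) = a * d * (b + c) := by
    linear_combination (b - d) * hcr - b * d * hsum
  field_simp
  linear_combination key

/-- **Christoffel dual of a planar discrete isothermic surface.**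
If `f : ℤ² → ℂ` takes distinct values at adjacent lattice points and every
elementary quadrilateral has cross-ratio `-1`, then there is a dual map
`f* : ℤ² → ℂ` whose horizontal edges are `1/conj(Δf)`, whose vertical edges
are `-1/conj(Δf)`, and whose elementary quadrilaterals again have
cross-ratio `-1`. -/
theorem discrete_isothermic_dual (f : ℤ → ℤ → ℂ)
    (hadjx : ∀ m n : ℤ, f (m + 1) n ≠ f m n)
    (hadjy : ∀ m n : ℤ, f m (n + 1) ≠ f m n)
    (hcr : ∀ m n : ℤ,
      (f m n - f (m + 1) n) * (f (m + 1) (n + 1) - f m (n + 1)) /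
        ((f (m + 1) n - f (m + 1) (n + 1)) * (f m (n + 1) - f m n)) = -1) :
    ∃ g : ℤ → ℤ → ℂ,
      (∀ m n : ℤ, g (m + 1) n - g m n = 1 / (starRingEnd ℂ) (f (m + 1) n - f m n)) ∧
      (∀ m n : ℤ, g m (n + 1) - g m n = -(1 / (starRingEnd ℂ) (f m (n + 1) - f m n))) ∧
      (∀ m n : ℤ,
        (g m n - g (m + 1) n) * (g (m + 1) (n + 1) - g m (n + 1)) /
          ((g (m + 1) n - g (m + 1) (n + 1)) * (g m (n + 1) - g m n)) = -1) := by
  have hx : ∀ m n, f (m + 1) n - f m n ≠ 0 := fun m n => sub_ne_zero.2 (hadjx m n)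
  have hy : ∀ m n, f m (n + 1) - f m n ≠ 0 := fun m n => sub_ne_zero.2 (hadjy m n)
  have hedge : ∀ m n, (f (m + 1) n - f m n) * (f (m + 1) (n + 1) - f m (n + 1)) =
      -((f (m + 1) (n + 1) - f (m + 1) n) * (f m (n + 1) - f m n)) := by
    intro m n
    have hne : (f (m + 1) n - f (m + 1) (n + 1)) * (f m (n + 1) - f m n) ≠ 0 :=
      mul_ne_zero (sub_ne_zero.2 (hadjy (m + 1) n).symm) (hy m n)
    have h := (div_eq_iff hne).1 (hcr m n)
    linear_combination -h
  obtain ⟨g, hgx, hgy⟩ := exists_discrete_potential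
    (fun m n => 1 / (starRingEnd ℂ) (f (m + 1) n - f m n))
    (fun m n => -(1 / (starRingEnd ℂ) (f m (n + 1) - f m n)))
    (fun m n => by
      have h := congrArg (starRingEnd ℂ) (dual_edges_closed (hx m n) (hy (m + 1) n)
        (hx m (n + 1)) (hy m n) (by ring) (hedge m n))
      simpa only [map_add, map_neg, map_div₀, map_one] using h)
  refine ⟨g, hgx, hgy, fun m n => ?_⟩
  have hconj := congrArg (starRingEnd ℂ) (hedge m n)
  simp only [map_mul, map_neg] at hconj
  have ha := (map_ne_zero (starRingEnd ℂ)).2 (hx m n)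
  have hb := (map_ne_zero (starRingEnd ℂ)).2 (hy (m + 1) n)
  have hc := (map_ne_zero (starRingEnd ℂ)).2 (hx m (n + 1))
  have hd := (map_ne_zero (starRingEnd ℂ)).2 (hy m n)
  rw [← neg_sub (g (m + 1) n) (g m n), ← neg_sub (g (m + 1) (n + 1)) (g (m + 1) n),
    hgx m n, hgx m (n + 1), hgy (m + 1) n, hgy m n]
  -- Generalizing keeps `field_simp` from expanding the conjugated differences.
  generalize (starRingEnd ℂ) (f (m + 1) n - f m n) = a at *
  generalize (starRingEnd ℂ) (f (m + 1) (n + 1) - f (m + 1) n) = b at *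
  generalize (starRingEnd ℂ) (f (m + 1) (n + 1) - f m (n + 1)) = c at *
  generalize (starRingEnd ℂ) (f m (n + 1) - f m n) = d at *
  field_simp
  linear_combination hconj
end

section
/- Let D ⊆ ℝ² be open and let f : D → ℝ³ be a C² isothermic immersion: at every point of D its partial derivatives satisfy ‖f_x‖ = ‖f_y‖ > 0, ⟨f_x, f_y⟩ = 0, and f_xy ∈ span{f_x, f_y}. Then the ℝ³-valued 1-form df* := (f_x/‖f_x‖²) dx − (f_y/‖f_y‖²) dy is closed on D; explicitly, ∂/∂y (f_x/‖f_x‖²) = ∂/∂x (−f_y/‖f_y‖²) at every point of D. -/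
/-!
Write `E = ‖f_x‖² = ‖f_y‖²` and `f_xy = a f_x + b f_y`. Since `f_x ⟂ f_y` and `f_xy = f_yx`
(symmetry of the second derivative of a `C²` map), `⟪f_x, f_xy⟫ = a E` and `⟪f_y, f_xy⟫ = b E`.
The quotient rule for `g / ‖g‖²` (`hasFDerivAt_inv_normSq_smul`, an instance of differentiating
inversion in the unit sphere) then gives
`∂_y (f_x / E) = (f_xy - 2 a f_x) / E = (-a f_x + b f_y) / E` and
`∂_x (-f_y / E) = -(f_xy - 2 b f_y) / E = (-a f_x + b f_y) / E`.
-/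

open RealInnerProductSpace

/-- Quotient rule for `g / ‖g‖²`, in the form of differentiability together with the value of the
derivative in a direction `v`. -/
theorem hasFDerivAt_inv_normSq_smul {V F : Type*} [NormedAddCommGroup V] [NormedSpace ℝ V]
    [NormedAddCommGroup F] [InnerProductSpace ℝ F] {g : V → F} {g' : V →L[ℝ] F} {p : V}
    (hg : HasFDerivAt g g' p) (h0 : g p ≠ 0) :
    DifferentiableAt ℝ (fun q => (‖g q‖ ^ 2)⁻¹ • g q) p ∧
    ∀ v, fderiv ℝ (fun q => (‖g q‖ ^ 2)⁻¹ • g q) p v =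
      (‖g p‖ ^ 2)⁻¹ • g' v - (2 * ⟪g p, g' v⟫ / (‖g p‖ ^ 2) ^ 2) • g p := by
  have hn : ‖g p‖ ^ 2 ≠ 0 := by simpa using h0
  have h := ((hasDerivAt_inv hn).comp_hasFDerivAt p hg.norm_sq).smul hg
  refine ⟨h.differentiableAt, fun v => ?_⟩
  have h2 := h.fderiv
  have h3 := congrArg (fun L => L v) h2
  refine h3.trans ?_
  simp [sub_eq_add_neg, ← neg_smul]
  congr 1
  field_simp

/-- **Closedness of the Christoffel dual 1-form.**
Let `D ⊆ ℝ²` be open and `f : D → ℝ³` a `C²` isothermic immersion: with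
`f_x p = fderiv ℝ f p (1,0)` and `f_y p = fderiv ℝ f p (0,1)`, at every point
of `D` one has `‖f_x‖ = ‖f_y‖ > 0`, `⟪f_x, f_y⟫ = 0`, and
`f_xy ∈ span {f_x, f_y}`.  Then the `ℝ³`-valued 1-form
`df* = (f_x/‖f_x‖²) dx − (f_y/‖f_y‖²) dy` is closed on `D`: its two
coefficient maps are differentiable on `D` and
`∂/∂y (f_x/‖f_x‖²) = ∂/∂x (−f_y/‖f_y‖²)` at every point of `D`. -/
theorem christoffel_form_closed
    (D : Set (ℝ × ℝ)) (hD : IsOpen D)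
    (f : ℝ × ℝ → EuclideanSpace ℝ (Fin 3))
    (hf : ContDiffOn ℝ 2 f D)
    (fx fy : ℝ × ℝ → EuclideanSpace ℝ (Fin 3))
    (hfx : ∀ p, fx p = fderiv ℝ f p (1, 0))
    (hfy : ∀ p, fy p = fderiv ℝ f p (0, 1))
    (hnorm : ∀ p ∈ D, ‖fx p‖ = ‖fy p‖)
    (hpos : ∀ p ∈ D, 0 < ‖fx p‖)
    (horth : ∀ p ∈ D, ⟪fx p, fy p⟫ = 0)
    (hspan : ∀ p ∈ D, fderiv ℝ fx p (0, 1) ∈ Submodule.span ℝ {fx p, fy p}) :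
    ∀ p ∈ D,
      DifferentiableAt ℝ (fun q => (‖fx q‖ ^ 2)⁻¹ • fx q) p ∧
      DifferentiableAt ℝ (fun q => -((‖fy q‖ ^ 2)⁻¹ • fy q)) p ∧
      fderiv ℝ (fun q => (‖fx q‖ ^ 2)⁻¹ • fx q) p (0, 1) =
        fderiv ℝ (fun q => -((‖fy q‖ ^ 2)⁻¹ • fy q)) p (1, 0) := by
  intro p hp
  have hfp : ContDiffAt ℝ 2 f p := hf.contDiffAt (hD.mem_nhds hp)
  have hd : HasFDerivAt (fderiv ℝ f) (fderiv ℝ (fderiv ℝ f) p) p :=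
    ((hfp.fderiv_right (m := 1) (by norm_num)).differentiableAt (by norm_num)).hasFDerivAt
  have hsymm : IsSymmSndFDerivAt ℝ f p := hfp.isSymmSndFDerivAt (by simp)
  obtain rfl : fx = fun q => fderiv ℝ f q (1, 0) := funext hfx
  obtain rfl : fy = fun q => fderiv ℝ f q (0, 1) := funext hfy
  have hX := hd.clm_apply (hasFDerivAt_const ((1, 0) : ℝ × ℝ) p)
  have hY := hd.clm_apply (hasFDerivAt_const ((0, 1) : ℝ × ℝ) p)
  have hs := hspan p hp
  have hn := hnorm p hp
  have h0 := hpos p hp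
  have ho := horth p hp
  rw [hX.fderiv] at hs
  simp only at hn h0 ho
  obtain ⟨dX, eX⟩ := hasFDerivAt_inv_normSq_smul hX (norm_pos_iff.1 h0)
  obtain ⟨dY, eY⟩ := hasFDerivAt_inv_normSq_smul hY (norm_pos_iff.1 (hn ▸ h0))
  refine ⟨dX, dY.neg, ?_⟩
  rw [fderiv_fun_neg, neg_apply, eX, eY]
  simp only [ContinuousLinearMap.comp_zero, zero_add, ContinuousLinearMap.flip_apply] at hs ⊢
  rw [← hn, hsymm (1, 0) (0, 1)]
  obtain ⟨a, b, hab⟩ := Submodule.mem_span_pair.1 hs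
  rw [← hab]
  generalize fderiv ℝ f p (1, 0) = X at *
  generalize fderiv ℝ f p (0, 1) = Y at *
  have ho' : ⟪Y, X⟫ = 0 := by rw [real_inner_comm, ho]
  simp only [inner_add_right, inner_smul_right, ho, ho', real_inner_self_eq_norm_sq, ← hn]
  have : ‖X‖ ≠ 0 := h0.ne'
  match_scalars <;> field_simp <;> ring
end

section
/- Let D ⊆ ℝ² be open and simply connected, and let f : D → ℝ³ be a C² isothermic immersion: at every point of D, ‖f_x‖ = ‖f_y‖ > 0, ⟨f_x, f_y⟩ = 0, and f_xy ∈ span{f_x, f_y}. Then there exists a C¹ map f* : D → ℝ³, unique up to an additive constant, with f*_x = f_x/‖f_x‖² and f*_y = −f_y/‖f_y‖² on D; and f* is again an isothermic immersion: ‖f*_x‖ = ‖f*_y‖ > 0, ⟨f*_x, f*_y⟩ = 0, and f*_xy ∈ span{f*_x, f*_y} at every point of D. -/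
/-!
On `D` consider the vector-valued 1-form `ω = A dx + B dy` with `A = f_x / ‖f_x‖²` and
`B = -f_y / ‖f_y‖²`. Writing `f_xy = a f_x + b f_y` and `N = ‖f_x‖² = ‖f_y‖²`, orthogonality gives
`N_y = 2 a N` and `N_x = 2 b N`, whence `A_y = (-a f_x + b f_y) / N = B_x`
(`christoffel_integrability`). So `ω` is closed, and
`f*` is a primitive of it; the formula for `A_y` also shows `f*_xy = -a f*_x - b f*_y`.
Uniqueness up to a constant is connectedness of `D`.

The Poincaré lemma in Mathlib covers convex sets only. To pass to a simply connected open set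
(`exists_primitive_of_closed`), local primitives on balls are glued: they differ by locally
constant functions, which serve as the transition functions of a covering space of `D` (a fiber
bundle with discrete fiber), and the identity of the simply connected space `D` lifts to a section
of this covering (`exists_glue_of_sub_locally_const`).
-/

open RealInnerProductSpace
open Set Filter Topology

/-- Gluing over a simply connected space: functions `h i`, defined on the members `U i` of an open
cover and with locally constant differences on overlaps, come from a single global function `g`
up to locally constant functions. The target `V` carries no topology; in the proof it is the
discrete fiber of a covering space, in which the coordinate of `g` over `U i` is `g - h i`. -/
lemma exists_glue_of_sub_locally_const {X V : Type*} [TopologicalSpace X] [SimplyConnectedSpace X]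
    [LocallyPathConnectedSpace X] [AddCommGroup V] (U : X → Set X) (hU : ∀ i, IsOpen (U i))
    (hmem : ∀ i, i ∈ U i) (h : X → X → V)
    (hloc : ∀ i j, ∀ x ∈ U i ∩ U j, ∀ᶠ y in 𝓝 x, h i y - h j y = h i x - h j x) :
    ∃ g : X → V, ∀ i, ∀ x ∈ U i, ∀ᶠ y in 𝓝 x, g y - h i y = g x - h i x := by
  let : TopologicalSpace V := ⊥
  have : DiscreteTopology V := ⟨rfl⟩
  let Z : FiberBundleCore X X V :=
    { baseSet := U
      isOpen_baseSet := hU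
      indexAt := id
      mem_baseSet_at := hmem
      coordChange := fun i j x v => v + (h i x - h j x)
      coordChange_self := by intros; simp
      continuousOn_coordChange := by
        rintro i j ⟨x, v⟩ ⟨hx, -⟩
        apply ContinuousAt.continuousWithinAt
        have hc : ContinuousAt (fun y => h i y - h j y) x :=
          continuousAt_const.congr ((hloc i j x hx).mono fun y hy => hy.symm)
        have hc' : ContinuousAt (fun p : X × V => h i p.1 - h j p.1) (x, v) :=
          ContinuousAt.comp (f := Prod.fst) (x := (x, v)) hc continuousAt_fst
        exact continuousAt_snd.add hc'
      coordChange_comp := by intros; abel }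
  have cov : IsCoveringMap Z.proj :=
    IsCoveringMap.mk Z.proj (fun _ => V) (fun x => Z.localTriv x) (fun x => hmem x)
  obtain ⟨x₀⟩ : Nonempty X := inferInstance
  obtain ⟨s, ⟨-, hs⟩, -⟩ := cov.existsUnique_continuousMap_lifts (ContinuousMap.id X) x₀
    (⟨x₀, (0 : V)⟩ : Z.TotalSpace) rfl
  have hs1 : ∀ x, (s x).1 = x := fun x => congrFun hs x
  let σ : X → V := fun x => (s x).2
  refine ⟨fun x => σ x + h x x, fun i x hx => ?_⟩
  have hsrc : s x ∈ (Z.localTriv i).source := by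
    rw [Z.mem_localTriv_source]
    change (s x).1 ∈ U i
    rwa [hs1]
  have hcont : ContinuousAt (fun y => (Z.localTriv i (s y)).2) x :=
    continuousAt_snd.comp
      (((Z.localTriv i).continuousAt hsrc).comp s.continuous.continuousAt)
  have key : ∀ y, (Z.localTriv i (s y)).2 = σ y + h y y - h i y := by
    intro y
    change σ y + (h (s y).1 (s y).1 - h i (s y).1) = _
    rw [hs1, add_sub_assoc]
  have hev : ∀ᶠ y in 𝓝 x, (Z.localTriv i (s y)).2 = (Z.localTriv i (s x)).2 :=
    hcont.tendsto.eventually_mem (s := {(Z.localTriv i (s x)).2})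
      ((isOpen_discrete _).mem_nhds rfl)
  simpa only [key] using hev

/-- The Poincaré lemma on a simply connected open set: a closed 1-form has a primitive. -/
lemma exists_primitive_of_closed {E F : Type*} [NormedAddCommGroup E] [NormedSpace ℝ E]
    [NormedAddCommGroup F] [NormedSpace ℝ F] [CompleteSpace F] {D : Set E} (hD : IsOpen D)
    (hDsc : SimplyConnectedSpace D) {ω : E → E →L[ℝ] F} (hω : DifferentiableOn ℝ ω D)
    (hsymm : ∀ a ∈ D, ∀ x y, fderiv ℝ ω a x y = fderiv ℝ ω a y x) :
    ∃ g : E → F, ∀ a ∈ D, HasFDerivAt g (ω a) a := by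
  classical
  have : LocallyPathConnectedSpace D := hD.locallyPathConnectedSpace
  choose r hr0 hr using fun i : D => Metric.isOpen_iff.1 hD i i.2
  choose h hh using fun i : D =>
    (convex_ball (i : E) (r i)).exists_forall_hasFDerivAt_of_fderiv_symmetric Metric.isOpen_ball
      (hω.mono (hr i)) (fun a ha => hsymm a (hr i ha))
  obtain ⟨g, hg⟩ := exists_glue_of_sub_locally_const
    (fun i : D => (Subtype.val ⁻¹' Metric.ball (i : E) (r i) : Set D))
    (fun i => Metric.isOpen_ball.preimage continuous_subtype_val)
    (fun i => Metric.mem_ball_self (hr0 i)) (fun i x => h i x) (by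
      rintro i j x ⟨hxi, hxj⟩
      have hopen : IsOpen (Metric.ball (i : E) (r i) ∩ Metric.ball (j : E) (r j)) :=
        Metric.isOpen_ball.inter Metric.isOpen_ball
      have hd : ∀ y ∈ Metric.ball (i : E) (r i) ∩ Metric.ball (j : E) (r j),
          HasFDerivAt (fun z => h i z - h j z) (0 : E →L[ℝ] F) y := fun y hy => by
        simpa using (hh i y hy.1).fun_sub (hh j y hy.2)
      filter_upwards [continuous_subtype_val.continuousAt.preimage_mem_nhds
        (hopen.mem_nhds ⟨hxi, hxj⟩)] with y hy
      exact hopen.is_const_of_fderiv_eq_zero (𝕜 := ℝ)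
        ((convex_ball _ _).inter (convex_ball _ _)).isPreconnected
        (fun z hz => (hd z hz).differentiableAt.differentiableWithinAt)
        (fun z hz => (hd z hz).fderiv) hy ⟨hxi, hxj⟩)
  refine ⟨fun x => if hx : x ∈ D then g ⟨x, hx⟩ else 0, fun a ha => ?_⟩
  have hev := hg ⟨a, ha⟩ ⟨a, ha⟩ (Metric.mem_ball_self (hr0 _))
  rw [nhds_subtype_eq_comap, eventually_comap] at hev
  refine ((hh ⟨a, ha⟩ a (Metric.mem_ball_self (hr0 _))).add_const
    (g ⟨a, ha⟩ - h ⟨a, ha⟩ a)).congr_of_eventuallyEq ?_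
  filter_upwards [hev, hD.mem_nhds ha] with y hy hyD
  have := hy ⟨y, hyD⟩ rfl
  simp only [dif_pos hyD]
  rw [← this]
  abel

/-- Derivative of the inversion `u / ‖u‖²` of a map `u` with nonzero value. -/
lemma fderiv_inv_norm_sq_smul {E F : Type*} [NormedAddCommGroup E] [NormedSpace ℝ E]
    [NormedAddCommGroup F] [InnerProductSpace ℝ F] {u : E → F} {p : E}
    (hu : DifferentiableAt ℝ u p) (h0 : u p ≠ 0) (v : E) :
    DifferentiableAt ℝ (fun q => (‖u q‖ ^ 2)⁻¹ • u q) p ∧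
    fderiv ℝ (fun q => (‖u q‖ ^ 2)⁻¹ • u q) p v = (‖u p‖ ^ 2)⁻¹ • fderiv ℝ u p v
      - (2 * ⟪u p, fderiv ℝ u p v⟫ * ((‖u p‖ ^ 2)⁻¹) ^ 2) • u p := by
  have hne : ‖u p‖ ^ 2 ≠ 0 := by simpa using h0
  have h1 := hu.hasFDerivAt.norm_sq
  have h2 := (hasDerivAt_inv hne).comp_hasFDerivAt p h1
  have h3 := h2.fun_smul hu.hasFDerivAt
  refine ⟨h3.differentiableAt, ?_⟩
  have h4 := h3.fderiv
  simp only [Function.comp_def] at h4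
  rw [h4]
  simp [sub_eq_add_neg, mul_comm]

/-- The integrability condition, pointwise: if `u` and `w` are orthogonal of equal nonzero length
and `u_y = w_x = a u + b w`, then `A = u / ‖u‖²` and `B = -w / ‖w‖²` satisfy
`A_y = B_x = -a A - b B`. -/
lemma christoffel_integrability {F : Type*} [NormedAddCommGroup F] [InnerProductSpace ℝ F]
    {u w : ℝ × ℝ → F} {p : ℝ × ℝ} (hu : DifferentiableAt ℝ u p) (hw : DifferentiableAt ℝ w p)
    (hN : ‖w p‖ = ‖u p‖) (hN0 : ‖u p‖ ≠ 0) (horth : ⟪u p, w p⟫ = 0) {a b : ℝ}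
    (hab : a • u p + b • w p = fderiv ℝ u p (0, 1))
    (hmix : fderiv ℝ w p (1, 0) = fderiv ℝ u p (0, 1)) :
    fderiv ℝ (fun q => (‖u q‖ ^ 2)⁻¹ • u q) p (0, 1) =
      (-a) • ((‖u p‖ ^ 2)⁻¹ • u p) + (-b) • (-((‖w p‖ ^ 2)⁻¹ • w p)) ∧
    fderiv ℝ (fun q => -((‖w q‖ ^ 2)⁻¹ • w q)) p (1, 0) =
      (-a) • ((‖u p‖ ^ 2)⁻¹ • u p) + (-b) • (-((‖w p‖ ^ 2)⁻¹ • w p)) := by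
  have hu0 : u p ≠ 0 := norm_ne_zero_iff.1 hN0
  have hw0 : w p ≠ 0 := norm_ne_zero_iff.1 (hN ▸ hN0)
  have hwu : ⟪w p, u p⟫ = 0 := by rw [real_inner_comm]; exact horth
  constructor
  · rw [(fderiv_inv_norm_sq_smul hu hu0 (0, 1)).2, ← hab, inner_add_right,
      inner_smul_right, inner_smul_right, horth, real_inner_self_eq_norm_sq, hN]
    match_scalars <;> field_simp <;> ring
  · rw [fderiv_fun_neg, neg_apply, (fderiv_inv_norm_sq_smul hw hw0 (1, 0)).2, hmix, ← hab,
      inner_add_right, inner_smul_right, inner_smul_right, hwu, real_inner_self_eq_norm_sq, hN]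
    match_scalars <;> field_simp <;> ring

/-- A linear map on the plane in terms of its values on the standard basis. -/
lemma clm_prod_apply_eq {F : Type*} [NormedAddCommGroup F] [NormedSpace ℝ F]
    (L : ℝ × ℝ →L[ℝ] F) (z : ℝ × ℝ) : L z = z.1 • L (1, 0) + z.2 • L (0, 1) := by
  rw [← map_smul, ← map_smul, ← map_add]; simp

/-- The Poincaré lemma for `A dx + B dy` on a simply connected open subset of the plane. -/
lemma exists_primitive_of_partials {F : Type*} [NormedAddCommGroup F] [NormedSpace ℝ F]
    [CompleteSpace F] {D : Set (ℝ × ℝ)} (hD : IsOpen D) (hDsc : SimplyConnectedSpace D)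
    {A B : ℝ × ℝ → F} (hdA : ∀ p ∈ D, DifferentiableAt ℝ A p)
    (hdB : ∀ p ∈ D, DifferentiableAt ℝ B p)
    (hclosed : ∀ p ∈ D, fderiv ℝ A p (0, 1) = fderiv ℝ B p (1, 0)) :
    ∃ g : ℝ × ℝ → F, ContDiffOn ℝ 1 g D ∧ (∀ p ∈ D, fderiv ℝ g p (1, 0) = A p) ∧
      ∀ p ∈ D, fderiv ℝ g p (0, 1) = B p := by
  let S := ContinuousLinearMap.smulRightL ℝ (ℝ × ℝ) F (.fst ℝ ℝ ℝ)
  let T := ContinuousLinearMap.smulRightL ℝ (ℝ × ℝ) F (.snd ℝ ℝ ℝ)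
  let ω : ℝ × ℝ → ℝ × ℝ →L[ℝ] F := fun p => S (A p) + T (B p)
  have hωd : ∀ p ∈ D, HasFDerivAt ω (S.comp (fderiv ℝ A p) + T.comp (fderiv ℝ B p)) p :=
    fun p hp => (S.hasFDerivAt.comp p (hdA p hp).hasFDerivAt).fun_add
      (T.hasFDerivAt.comp p (hdB p hp).hasFDerivAt)
  have hω : DifferentiableOn ℝ ω D := fun p hp =>
    (hωd p hp).differentiableAt.differentiableWithinAt
  obtain ⟨g, hg⟩ := exists_primitive_of_closed hD hDsc hω (by
    intro p hp x y
    rw [(hωd p hp).fderiv]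
    change y.1 • fderiv ℝ A p x + y.2 • fderiv ℝ B p x =
      x.1 • fderiv ℝ A p y + x.2 • fderiv ℝ B p y
    rw [clm_prod_apply_eq _ x, clm_prod_apply_eq _ y, clm_prod_apply_eq (fderiv ℝ B p) x,
      clm_prod_apply_eq (fderiv ℝ B p) y, hclosed p hp]
    module)
  have hgd : DifferentiableOn ℝ g D := fun p hp =>
    (hg p hp).differentiableAt.differentiableWithinAt
  refine ⟨g, ?_, fun p hp => ?_, fun p hp => ?_⟩
  · rw [show (1 : WithTop ℕ∞) = 0 + 1 by simp, contDiffOn_succ_iff_fderiv_of_isOpen hD]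
    exact ⟨hgd, by simp, contDiffOn_zero.2 (hω.continuousOn.congr fun p hp => (hg p hp).fderiv)⟩
  · rw [(hg p hp).fderiv]; simp [ω, S, T]
  · rw [(hg p hp).fderiv]; simp [ω, S, T]

/-- **Existence and uniqueness of the Christoffel transform, and its isothermicity.**
Let `D ⊆ ℝ²` be open and simply connected, and let `f : D → ℝ³` be a `C²`
isothermic immersion (`‖f_x‖ = ‖f_y‖ > 0`, `⟪f_x, f_y⟫ = 0`,
`f_xy ∈ span {f_x, f_y}` on `D`).  Then there is a `C¹` map `f* : D → ℝ³`,
unique up to an additive constant, with `f*_x = f_x/‖f_x‖²` and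
`f*_y = −f_y/‖f_y‖²` on `D`; and `f*` is again an isothermic immersion. -/
theorem christoffel_transform_exists_unique_isothermic
    (D : Set (ℝ × ℝ)) (hD : IsOpen D) (hDsc : SimplyConnectedSpace D)
    (f : ℝ × ℝ → EuclideanSpace ℝ (Fin 3))
    (hf : ContDiffOn ℝ 2 f D)
    (fx fy : ℝ × ℝ → EuclideanSpace ℝ (Fin 3))
    (hfx : ∀ p, fx p = fderiv ℝ f p (1, 0))
    (hfy : ∀ p, fy p = fderiv ℝ f p (0, 1))
    (hnorm : ∀ p ∈ D, ‖fx p‖ = ‖fy p‖)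
    (hpos : ∀ p ∈ D, 0 < ‖fx p‖)
    (horth : ∀ p ∈ D, ⟪fx p, fy p⟫ = 0)
    (hspan : ∀ p ∈ D, fderiv ℝ fx p (0, 1) ∈ Submodule.span ℝ {fx p, fy p}) :
    ∃ g : ℝ × ℝ → EuclideanSpace ℝ (Fin 3),
      -- `g = f*` is `C¹` on `D` with the prescribed partial derivatives
      ContDiffOn ℝ 1 g D ∧
      (∀ p ∈ D, fderiv ℝ g p (1, 0) = (‖fx p‖ ^ 2)⁻¹ • fx p) ∧
      (∀ p ∈ D, fderiv ℝ g p (0, 1) = -((‖fy p‖ ^ 2)⁻¹ • fy p)) ∧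
      -- uniqueness up to an additive constant
      (∀ g' : ℝ × ℝ → EuclideanSpace ℝ (Fin 3),
        ContDiffOn ℝ 1 g' D →
        (∀ p ∈ D, fderiv ℝ g' p (1, 0) = (‖fx p‖ ^ 2)⁻¹ • fx p) →
        (∀ p ∈ D, fderiv ℝ g' p (0, 1) = -((‖fy p‖ ^ 2)⁻¹ • fy p)) →
        ∃ c : EuclideanSpace ℝ (Fin 3), ∀ p ∈ D, g' p = g p + c) ∧
      -- `f*` is again an isothermic immersion
      (∀ p ∈ D, ‖fderiv ℝ g p (1, 0)‖ = ‖fderiv ℝ g p (0, 1)‖) ∧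
      (∀ p ∈ D, 0 < ‖fderiv ℝ g p (1, 0)‖) ∧
      (∀ p ∈ D, ⟪fderiv ℝ g p (1, 0), fderiv ℝ g p (0, 1)⟫ = 0) ∧
      (∀ p ∈ D, fderiv ℝ (fun q => fderiv ℝ g q (1, 0)) p (0, 1) ∈
        Submodule.span ℝ {fderiv ℝ g p (1, 0), fderiv ℝ g p (0, 1)}) := by
  have hne : ∀ p ∈ D, fx p ≠ 0 := fun p hp => norm_pos_iff.1 (hpos p hp)
  have hne' : ∀ p ∈ D, fy p ≠ 0 := fun p hp => norm_pos_iff.1 (hnorm p hp ▸ hpos p hp)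
  have hdf : ∀ p ∈ D, DifferentiableAt ℝ (fderiv ℝ f) p := fun p hp =>
    ((hf.contDiffAt (hD.mem_nhds hp)).fderiv_right (m := 1) (by norm_num)).differentiableAt
      (by norm_num)
  obtain rfl : fx = fun p => fderiv ℝ f p (1, 0) := funext hfx
  obtain rfl : fy = fun p => fderiv ℝ f p (0, 1) := funext hfy
  have hdx : ∀ p ∈ D, DifferentiableAt ℝ (fun p => fderiv ℝ f p (1, 0)) p := fun p hp =>
    (hdf p hp).clm_apply (differentiableAt_const _)
  have hdy : ∀ p ∈ D, DifferentiableAt ℝ (fun p => fderiv ℝ f p (0, 1)) p := fun p hp =>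
    (hdf p hp).clm_apply (differentiableAt_const _)
  have hmix : ∀ p ∈ D, fderiv ℝ (fun p => fderiv ℝ f p (0, 1)) p (1, 0) =
      fderiv ℝ (fun p => fderiv ℝ f p (1, 0)) p (0, 1) := fun p hp => by
    have hs : IsSymmSndFDerivAt ℝ f p :=
      (hf.contDiffAt (hD.mem_nhds hp)).isSymmSndFDerivAt (by simp)
    rw [fderiv_clm_apply (hdf p hp) (differentiableAt_const _),
      fderiv_clm_apply (hdf p hp) (differentiableAt_const _)]
    simpa using hs (1, 0) (0, 1)
  generalize hfx' : (fun p => fderiv ℝ f p (1, 0)) = u at *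
  generalize hfy' : (fun p => fderiv ℝ f p (0, 1)) = w at *
  set A : ℝ × ℝ → EuclideanSpace ℝ (Fin 3) := fun p => (‖u p‖ ^ 2)⁻¹ • u p with hA
  set B : ℝ × ℝ → EuclideanSpace ℝ (Fin 3) := fun p => -((‖w p‖ ^ 2)⁻¹ • w p) with hB
  have hdA : ∀ p ∈ D, DifferentiableAt ℝ A p := fun p hp =>
    (fderiv_inv_norm_sq_smul (hdx p hp) (hne p hp) 0).1
  have hdB : ∀ p ∈ D, DifferentiableAt ℝ B p := fun p hp =>
    (fderiv_inv_norm_sq_smul (hdy p hp) (hne' p hp) 0).1.neg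
  have hAB : ∀ p ∈ D, ∃ a b : ℝ, fderiv ℝ A p (0, 1) = (-a) • A p + (-b) • B p ∧
      fderiv ℝ B p (1, 0) = (-a) • A p + (-b) • B p := by
    intro p hp
    obtain ⟨a, b, hab⟩ := Submodule.mem_span_pair.1 (hspan p hp)
    exact ⟨a, b, christoffel_integrability (hdx p hp) (hdy p hp) (hnorm p hp).symm
      (hpos p hp).ne' (horth p hp) hab (hmix p hp)⟩
  obtain ⟨g, hg1, hgx, hgy⟩ := exists_primitive_of_partials hD hDsc hdA hdB fun p hp => by
    obtain ⟨a, b, h1, h2⟩ := hAB p hp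
    exact h1.trans h2.symm
  have hgd : DifferentiableOn ℝ g D := hg1.differentiableOn (by norm_num)
  have hAn : ∀ p ∈ D, ‖A p‖ = ‖u p‖⁻¹ := fun p hp => by
    have := (hpos p hp).ne'
    simp only [hA, norm_smul, norm_inv, norm_pow, norm_norm]
    field_simp
  have hBn : ∀ p ∈ D, ‖B p‖ = ‖u p‖⁻¹ := fun p hp => by
    have := (hpos p hp).ne'
    simp only [hB, norm_neg, norm_smul, norm_inv, norm_pow, norm_norm, ← hnorm p hp]
    field_simp
  refine ⟨g, hg1, hgx, hgy, ?_, ?_, ?_, ?_, ?_⟩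
  · intro g' hg' hx hy
    have := hDsc
    have hconn : IsPreconnected D :=
      (isPathConnected_iff_pathConnectedSpace.2 inferInstance).isConnected.isPreconnected
    refine hD.exists_eq_add_of_fderiv_eq hconn (hg'.differentiableOn (by norm_num)) hgd
      fun p hp => ?_
    ext1
    · ext1; simpa using (hx p hp).trans (hgx p hp).symm
    · ext1; simpa using (hy p hp).trans (hgy p hp).symm
  · intro p hp
    rw [hgx p hp, hgy p hp, hAn p hp, hBn p hp]
  · intro p hp
    rw [hgx p hp, hAn p hp]
    exact inv_pos.2 (hpos p hp)
  · intro p hp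
    rw [hgx p hp, hgy p hp]
    simp [hA, hB, inner_smul_left, inner_smul_right, horth p hp]
  · intro p hp
    obtain ⟨a, b, h1, -⟩ := hAB p hp
    have hev : (fun q => fderiv ℝ g q (1, 0)) =ᶠ[𝓝 p] A :=
      (hD.eventually_mem hp).mono hgx
    rw [hev.fderiv_eq, hgx p hp, hgy p hp, h1]
    exact Submodule.mem_span_pair.2 ⟨_, _, rfl⟩
end

section
/- Let D ⊆ ℝ² be open, connected and simply connected, and let f : D → ℝ³ be a smooth isothermic immersion (‖f_x‖ = ‖f_y‖ = λ > 0, ⟨f_x, f_y⟩ = 0, f_xy ∈ span{f_x, f_y} on D) with unit normal N = (f_x × f_y)/λ², and let f* : D → ℝ³ be a Christoffel dual of f (f*_x = f_x/λ², f*_y = −f_y/λ²). Suppose f is minimal, i.e. ⟨N_x, f_x⟩ + ⟨N_y, f_y⟩ = 0 on D, and has no umbilic points, i.e. ⟨N_x, f_x⟩ ≠ 0 at every point of D. Then there exist a constant vector c ∈ ℝ³ and a constant ρ ∈ ℝ, ρ ≠ 0, such that f* = c + ρ·N on D; in particular, the dual immersion f* coincides with the Gauss map N of f up to scale and translation. 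-/
/-!
Write `g = ⟪N_x, f_x⟫`. Differentiating `⟪N, N⟫ = 1` and `⟪N, f_x⟫ = ⟪N, f_y⟫ = 0`, and using that
`f_xy` is tangential, shows that `N_x` is a multiple of `f_x` and `N_y` a multiple of `f_y`;
minimality then says precisely that `dN = g • df*`. Both `N` and `f*` have symmetric second
derivatives, so `dg ∧ df* = 0`, and since `f*_x`, `f*_y` are linearly independent, `dg = 0`
(`fderiv_factor_eq_zero`). Hence `g` is a nonzero constant on the connected set `D`, and
`f* - g⁻¹ • N` has zero derivative, so it is constant too.
-/

open RealInnerProductSpace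

/-- The cross product on `ℝ³ = EuclideanSpace ℝ (Fin 3)`. -/
noncomputable def cross3 (u v : EuclideanSpace ℝ (Fin 3)) : EuclideanSpace ℝ (Fin 3) :=
  (WithLp.equiv 2 (Fin 3 → ℝ)).symm
    ![u 1 * v 2 - u 2 * v 1, u 2 * v 0 - u 0 * v 2, u 0 * v 1 - u 1 * v 0]

local notation "E3" => EuclideanSpace ℝ (Fin 3)

lemma inner_coord (u v : E3) : ⟪u, v⟫ = u 0 * v 0 + u 1 * v 1 + u 2 * v 2 := by
  simp [PiLp.inner_apply, Fin.sum_univ_three, mul_comm]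

lemma inner_cross3_left (u v : E3) : ⟪cross3 u v, u⟫ = 0 := by
  simp [inner_coord, cross3]; ring

lemma inner_cross3_right (u v : E3) : ⟪cross3 u v, v⟫ = 0 := by
  simp [inner_coord, cross3]; ring

lemma inner_cross3_self (u v : E3) :
    ⟪cross3 u v, cross3 u v⟫ = ⟪u, u⟫ * ⟪v, v⟫ - ⟪u, v⟫ ^ 2 := by
  simp only [inner_coord]; simp [cross3]; ring

/-- For a nondegenerate orthogonal pair `u, v`, the vectors `u, v, u × v` span `ℝ³`. -/
lemma eq_zero_of_inner_frame {u v w : E3} (hu : u ≠ 0) (hv : v ≠ 0) (huv : ⟪u, v⟫ = 0)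
    (h1 : ⟪w, u⟫ = 0) (h2 : ⟪w, v⟫ = 0) (h3 : ⟪w, cross3 u v⟫ = 0) : w = 0 := by
  -- Combines Lagrange's identity for `w` and `u × v` with
  -- `w × (u × v) = ⟪w, v⟫ u - ⟪w, u⟫ v = 0`.
  have key : ⟪w, w⟫ * ⟪cross3 u v, cross3 u v⟫ = ⟪w, cross3 u v⟫ ^ 2
      + (⟪w, v⟫ ^ 2 * ⟪u, u⟫ - 2 * ⟪w, v⟫ * ⟪w, u⟫ * ⟪u, v⟫ + ⟪w, u⟫ ^ 2 * ⟪v, v⟫) := by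
    simp only [inner_coord]; simp [cross3]; ring
  rw [inner_cross3_self, h1, h2, h3, huv] at key
  have : ⟪w, w⟫ * (⟪u, u⟫ * ⟪v, v⟫) = 0 := by linear_combination key
  simpa [hu, hv] using this

lemma contDiffOn_cross3 {D : Set (ℝ × ℝ)} {a b : ℝ × ℝ → E3} {n : WithTop ℕ∞}
    (ha : ContDiffOn ℝ n a D) (hb : ContDiffOn ℝ n b D) :
    ContDiffOn ℝ n (fun p => cross3 (a p) (b p)) D := by
  rw [contDiffOn_euclidean] at ha hb ⊢
  intro i
  have h := fun j k => (ha j).mul (hb k)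
  fin_cases i
  · simpa [cross3] using (h 1 2).sub (h 2 1)
  · simpa [cross3] using (h 2 0).sub (h 0 2)
  · simpa [cross3] using (h 0 1).sub (h 1 0)

lemma clm_prod_ext {F : Type*} [NormedAddCommGroup F] [NormedSpace ℝ F] {L M : ℝ × ℝ →L[ℝ] F}
    (h1 : L (1, 0) = M (1, 0)) (h2 : L (0, 1) = M (0, 1)) : L = M := by
  ext <;> simpa

/-- If `dG = g • dF` near `p`, where `dF = A` is differentiable at `p` and the partial derivatives
of `F` at `p` are nonzero and orthogonal, then `dg = 0` at `p`: symmetry of the second derivatives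
of `F` and `G` gives `dg v • A w = dg w • A v`. -/
lemma fderiv_factor_eq_zero {F G : ℝ × ℝ → E3} {A : ℝ × ℝ → ℝ × ℝ →L[ℝ] E3} {g : ℝ × ℝ → ℝ}
    {p : ℝ × ℝ} (hF : ∀ᶠ q in nhds p, HasFDerivAt F (A q) q)
    (hG : ∀ᶠ q in nhds p, HasFDerivAt G (g q • A q) q)
    (hA : DifferentiableAt ℝ A p) (hg : DifferentiableAt ℝ g p)
    (hne1 : A p (1, 0) ≠ 0) (hne2 : A p (0, 1) ≠ 0) (horth : ⟪A p (1, 0), A p (0, 1)⟫ = 0) :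
    fderiv ℝ g p = 0 := by
  have s1 := second_derivative_symmetric_of_eventually hF hA.hasFDerivAt (1, 0) (0, 1)
  have s2 := second_derivative_symmetric_of_eventually hG
    (hg.hasFDerivAt.smul hA.hasFDerivAt) (1, 0) (0, 1)
  simp only [add_apply, smul_apply,
    ContinuousLinearMap.smulRight_apply, s1, add_right_inj] at s2
  have e1 := congrArg (fun v => ⟪A p (1, 0), v⟫) s2
  have e2 := congrArg (fun v => ⟪v, A p (0, 1)⟫) s2
  simp only [inner_smul_left, inner_smul_right, horth, mul_zero] at e1 e2
  refine clm_prod_ext ?_ ?_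
  · simpa [hne2] using e2
  · simpa [hne1] using e1.symm

lemma inner_fderiv_of_inner_const {D : Set (ℝ × ℝ)} (hD : IsOpen D) {a b : ℝ × ℝ → E3} {k : ℝ}
    (h : ∀ p ∈ D, ⟪a p, b p⟫ = k) {p : ℝ × ℝ} (hp : p ∈ D) (ha : DifferentiableAt ℝ a p)
    (hb : DifferentiableAt ℝ b p) (v : ℝ × ℝ) :
    ⟪fderiv ℝ a p v, b p⟫ = - ⟪a p, fderiv ℝ b p v⟫ := by
  have e : (fun q => ⟪a q, b q⟫) =ᶠ[nhds p] fun _ => k := by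
    filter_upwards [hD.mem_nhds hp] with q hq using h q hq
  have h0 := congrArg (fun L : ℝ × ℝ →L[ℝ] ℝ => L v) (e.fderiv_eq (𝕜 := ℝ))
  simp only [fderiv_inner_apply ℝ ha hb] at h0
  simp at h0
  linarith

/-- **The Christoffel dual of a minimal isothermic immersion is its Gauss map
(up to scale and translation).**
Let `D ⊆ ℝ²` be open, connected and simply connected, `f : D → ℝ³` a smooth
isothermic immersion with unit normal `N = (f_x × f_y)/λ²` (where
`λ = ‖f_x‖ = ‖f_y‖ > 0`), and `f*` a Christoffel dual (`f*_x = f_x/λ²`,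
`f*_y = −f_y/λ²`).  If `f` is minimal (`⟪N_x,f_x⟫ + ⟪N_y,f_y⟫ = 0`) and has
no umbilic points (`⟪N_x,f_x⟫ ≠ 0`), then `f* = c + ρ • N` for some constant
vector `c` and constant `ρ ≠ 0`. -/
theorem christoffel_dual_of_minimal_is_gauss_map
    (D : Set (ℝ × ℝ)) (hD : IsOpen D) (hDconn : IsConnected D)
    (hDsc : SimplyConnectedSpace D)
    (f : ℝ × ℝ → EuclideanSpace ℝ (Fin 3))
    (hf : ContDiffOn ℝ (⊤ : ℕ∞) f D)
    (fx fy : ℝ × ℝ → EuclideanSpace ℝ (Fin 3))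
    (hfx : ∀ p, fx p = fderiv ℝ f p (1, 0))
    (hfy : ∀ p, fy p = fderiv ℝ f p (0, 1))
    (hnorm : ∀ p ∈ D, ‖fx p‖ = ‖fy p‖)
    (hpos : ∀ p ∈ D, 0 < ‖fx p‖)
    (horth : ∀ p ∈ D, ⟪fx p, fy p⟫ = 0)
    (hspan : ∀ p ∈ D, fderiv ℝ fx p (0, 1) ∈ Submodule.span ℝ {fx p, fy p})
    -- the unit normal `N = (f_x × f_y)/λ²`
    (N : ℝ × ℝ → EuclideanSpace ℝ (Fin 3))
    (hN : ∀ p ∈ D, N p = (‖fx p‖ ^ 2)⁻¹ • cross3 (fx p) (fy p))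
    -- `f*` is a Christoffel dual of `f`
    (fstar : ℝ × ℝ → EuclideanSpace ℝ (Fin 3))
    (hstardiff : ∀ p ∈ D, DifferentiableAt ℝ fstar p)
    (hstarx : ∀ p ∈ D, fderiv ℝ fstar p (1, 0) = (‖fx p‖ ^ 2)⁻¹ • fx p)
    (hstary : ∀ p ∈ D, fderiv ℝ fstar p (0, 1) = -((‖fy p‖ ^ 2)⁻¹ • fy p))
    -- `f` is minimal
    (hmin : ∀ p ∈ D, ⟪fderiv ℝ N p (1, 0), fx p⟫ + ⟪fderiv ℝ N p (0, 1), fy p⟫ = 0)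
    -- `f` has no umbilic points
    (humb : ∀ p ∈ D, ⟪fderiv ℝ N p (1, 0), fx p⟫ ≠ 0) :
    ∃ (c : EuclideanSpace ℝ (Fin 3)) (ρ : ℝ), ρ ≠ 0 ∧
      ∀ p ∈ D, fstar p = c + ρ • N p := by
  have hfxS : ContDiffOn ℝ (⊤ : ℕ∞) fx D := by
    have : fx = fun p => fderiv ℝ f p (1, 0) := funext hfx
    rw [this]
    exact (hf.fderiv_of_isOpen hD (by simp)).clm_apply contDiffOn_const
  have hfyS : ContDiffOn ℝ (⊤ : ℕ∞) fy D := by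
    have : fy = fun p => fderiv ℝ f p (0, 1) := funext hfy
    rw [this]
    exact (hf.fderiv_of_isOpen hD (by simp)).clm_apply contDiffOn_const
  have hinvx : ContDiffOn ℝ (⊤ : ℕ∞) (fun p => (‖fx p‖ ^ 2)⁻¹) D :=
    (hfxS.norm_sq ℝ).inv fun p hp => pow_ne_zero 2 (hpos p hp).ne'
  have hNS : ContDiffOn ℝ (⊤ : ℕ∞) N D :=
    (hinvx.smul (contDiffOn_cross3 hfxS hfyS)).congr hN
  have hdiff : ∀ {F : Type} [NormedAddCommGroup F] [NormedSpace ℝ F] {a : ℝ × ℝ → F},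
      ContDiffOn ℝ (⊤ : ℕ∞) a D → ∀ p ∈ D, DifferentiableAt ℝ a p := fun h p hp =>
    (h.contDiffAt (hD.mem_nhds hp)).differentiableAt (by simp)
  have hx0 : ∀ p ∈ D, fx p ≠ 0 := fun p hp => norm_pos_iff.mp (hpos p hp)
  have hy0 : ∀ p ∈ D, fy p ≠ 0 := fun p hp => norm_pos_iff.mp (hnorm p hp ▸ hpos p hp)
  have hmixed : ∀ p ∈ D, fderiv ℝ fy p (1, 0) = fderiv ℝ fx p (0, 1) := by
    intro p hp
    have hs := (hf.contDiffAt (hD.mem_nhds hp)).isSymmSndFDerivAt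
      (by simpa using WithTop.coe_le_coe.mpr (le_top : (2 : ℕ∞) ≤ ⊤)) (1, 0) (0, 1)
    have hd := hdiff (hf.fderiv_of_isOpen (m := (⊤ : ℕ∞)) hD (by simp)) p hp
    rw [funext hfx, funext hfy, fderiv_clm_apply hd (by fun_prop),
      fderiv_clm_apply hd (by fun_prop)]
    simpa using hs
  have hNx : ∀ p ∈ D, ⟪N p, fx p⟫ = 0 := fun p hp => by
    rw [hN p hp, inner_smul_left, inner_cross3_left, mul_zero]
  have hNy : ∀ p ∈ D, ⟪N p, fy p⟫ = 0 := fun p hp => by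
    rw [hN p hp, inner_smul_left, inner_cross3_right, mul_zero]
  have hNN : ∀ p ∈ D, ⟪N p, N p⟫ = 1 := fun p hp => by
    have := (hpos p hp).ne'
    rw [hN p hp, inner_smul_left, inner_smul_right, inner_cross3_self, horth p hp,
      real_inner_self_eq_norm_sq, real_inner_self_eq_norm_sq, ← hnorm p hp]
    simp
    field_simp
  have hspan' : ∀ p ∈ D, ⟪N p, fderiv ℝ fx p (0, 1)⟫ = 0 := by
    intro p hp
    obtain ⟨a, b, hab⟩ := Submodule.mem_span_pair.mp (hspan p hp)
    rw [← hab, inner_add_right, inner_smul_right, inner_smul_right, hNx p hp, hNy p hp]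
    simp
  have hdNN : ∀ p ∈ D, ∀ v, ⟪fderiv ℝ N p v, N p⟫ = 0 := by
    intro p hp v
    have := inner_fderiv_of_inner_const hD hNN hp (hdiff hNS p hp) (hdiff hNS p hp) v
    rw [real_inner_comm (fderiv ℝ N p v) (N p)] at this
    linarith
  have hNxy : ∀ p ∈ D, ⟪fderiv ℝ N p (1, 0), fy p⟫ = 0 := fun p hp => by
    rw [inner_fderiv_of_inner_const hD hNy hp (hdiff hNS p hp) (hdiff hfyS p hp), hmixed p hp,
      hspan' p hp, neg_zero]
  have hNyx : ∀ p ∈ D, ⟪fderiv ℝ N p (0, 1), fx p⟫ = 0 := fun p hp => by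
    rw [inner_fderiv_of_inner_const hD hNx hp (hdiff hNS p hp) (hdiff hfxS p hp), hspan' p hp,
      neg_zero]
  have hframe : ∀ p ∈ D, ∀ w, ⟪w, fx p⟫ = 0 → ⟪w, fy p⟫ = 0 → ⟪w, N p⟫ = 0 → w = 0 := by
    intro p hp w h1 h2 h3
    refine eq_zero_of_inner_frame (hx0 p hp) (hy0 p hp) (horth p hp) h1 h2 ?_
    rw [hN p hp, inner_smul_right] at h3
    simpa [hx0 p hp] using h3
  set g : ℝ × ℝ → ℝ := fun p => ⟪fderiv ℝ N p (1, 0), fx p⟫ with hgdef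
  have hgd : ∀ p ∈ D, DifferentiableAt ℝ g p :=
    hdiff (((hNS.fderiv_of_isOpen hD (by simp)).clm_apply contDiffOn_const).inner ℝ hfxS)
  have hdN : ∀ p ∈ D, fderiv ℝ N p = g p • fderiv ℝ fstar p := by
    intro p hp
    have hl : ‖fx p‖ ≠ 0 := (hpos p hp).ne'
    have hyx : ⟪fy p, fx p⟫ = 0 := by rw [real_inner_comm]; exact horth p hp
    have hxN : ⟪fx p, N p⟫ = 0 := by rw [real_inner_comm]; exact hNx p hp
    have hyN : ⟪fy p, N p⟫ = 0 := by rw [real_inner_comm]; exact hNy p hp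
    refine clm_prod_ext ?_ ?_
    · rw [smul_apply, hstarx p hp]
      refine sub_eq_zero.mp (hframe p hp _ ?_ ?_ ?_)
      · rw [inner_sub_left, real_inner_smul_left, real_inner_smul_left,
          real_inner_self_eq_norm_sq, inv_mul_cancel₀ (pow_ne_zero 2 hl)]
        simp [hgdef]
      · rw [inner_sub_left, real_inner_smul_left, real_inner_smul_left, horth p hp, hNxy p hp]
        simp
      · rw [inner_sub_left, real_inner_smul_left, real_inner_smul_left, hxN, hdNN p hp]
        simp
    · rw [smul_apply, hstary p hp, ← hnorm p hp]
      refine sub_eq_zero.mp (hframe p hp _ ?_ ?_ ?_)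
      · rw [inner_sub_left, real_inner_smul_left, inner_neg_left, real_inner_smul_left, hyx,
          hNyx p hp]
        simp
      · rw [inner_sub_left, real_inner_smul_left, inner_neg_left, real_inner_smul_left,
          real_inner_self_eq_norm_sq, ← hnorm p hp, inv_mul_cancel₀ (pow_ne_zero 2 hl)]
        have := hmin p hp
        simp only [hgdef]
        linarith
      · rw [inner_sub_left, real_inner_smul_left, inner_neg_left, real_inner_smul_left, hyN,
          hdNN p hp]
        simp
  have hstarS : ContDiffOn ℝ (⊤ : ℕ∞) (fderiv ℝ fstar) D := by
    have h : ContDiffOn ℝ (⊤ : ℕ∞) (fun p =>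
        (ContinuousLinearMap.fst ℝ ℝ ℝ).smulRight ((‖fx p‖ ^ 2)⁻¹ • fx p) +
        (ContinuousLinearMap.snd ℝ ℝ ℝ).smulRight (-((‖fx p‖ ^ 2)⁻¹ • fy p))) D :=
      (contDiffOn_const.smulRight (hinvx.smul hfxS)).add
        (contDiffOn_const.smulRight (hinvx.smul hfyS).neg)
    refine h.congr fun p hp => clm_prod_ext ?_ ?_
    · simp [hstarx p hp]
    · simp [hstary p hp, hnorm p hp]
  have hdg : ∀ p ∈ D, fderiv ℝ g p = 0 := by
    intro p hp
    refine fderiv_factor_eq_zero (F := fstar) (G := N) ?_ ?_ (hdiff hstarS p hp) (hgd p hp)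
      ?_ ?_ ?_
    · filter_upwards [hD.mem_nhds hp] with q hq using (hstardiff q hq).hasFDerivAt
    · filter_upwards [hD.mem_nhds hp] with q hq
      rw [← hdN q hq]
      exact (hdiff hNS q hq).hasFDerivAt
    · simp [hstarx p hp, hx0 p hp]
    · simp [hstary p hp, hy0 p hp]
    · simp [hstarx p hp, hstary p hp, inner_smul_left, inner_smul_right, horth p hp]
  obtain ⟨k, hk⟩ := hD.exists_is_const_of_fderiv_eq_zero hDconn.isPreconnected
    (fun p hp => (hgd p hp).differentiableWithinAt) hdg
  obtain ⟨p₀, hp₀⟩ := hDconn.nonempty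
  have hk0 : k ≠ 0 := hk p₀ hp₀ ▸ humb p₀ hp₀
  obtain ⟨c, hc⟩ := hD.exists_is_const_of_fderiv_eq_zero (f := fun p => fstar p - k⁻¹ • N p)
    hDconn.isPreconnected
    (fun p hp => ((hstardiff p hp).sub
      ((hdiff hNS p hp).const_smul k⁻¹)).differentiableWithinAt)
    (fun p hp => by
      rw [fderiv_fun_sub (hstardiff p hp) ((hdiff hNS p hp).fun_const_smul k⁻¹),
        fderiv_fun_const_smul (hdiff hNS p hp), hdN p hp, hk p hp, smul_smul,
        inv_mul_cancel₀ hk0, one_smul, sub_self]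
      rfl)
  exact ⟨c, k⁻¹, inv_ne_zero hk0, fun p hp => sub_eq_iff_eq_add.mp (hc p hp)⟩
end

section
/- Let D ⊆ ℝ² be open, connected and simply connected, and let f : D → ℝ³ be a smooth isothermic immersion (‖f_x‖ = ‖f_y‖ = λ > 0, ⟨f_x, f_y⟩ = 0, f_xy ∈ span{f_x, f_y} on D) with unit normal N = (f_x × f_y)/λ², without umbilic points (⟨N_x, f_x⟩ ≠ 0 everywhere on D), and let f* : D → ℝ³ be a Christoffel dual of f (f*_x = f_x/λ², f*_y = −f_y/λ²). Then f is minimal, i.e. ⟨N_x, f_x⟩ + ⟨N_y, f_y⟩ = 0 on D, if and only if f* is contained in a sphere: there exist c ∈ ℝ³ and ρ > 0 such that ‖f*(p) − c‖ = ρ for all p ∈ D. -/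
/-!
At every point `f_x`, `f_y`, `N` is an orthogonal frame, so a vector of `ℝ³` is determined by its
inner products with these three (`frame_expansion`). Everything else comes from differentiating
inner products that are constant on `D` (`inner_deriv_of_const`).

If `f*` lies on a sphere about `c`, then `f* - c` is orthogonal to `f*_x` and `f*_y`, hence to
`f_x` and `f_y`, so `f* - c = σ N` with a function `σ`. Differentiating `⟪f* - c, f_x⟫ = 0` in `x`
and `⟪f* - c, f_y⟫ = 0` in `y` gives `σ ⟪N_x, f_x⟫ = 1` and `σ ⟪N_y, f_y⟫ = -1`,
so `f` is minimal.

Conversely let `f` be minimal and put `h = ⟪N_x, f_x⟫ = -⟪N_y, f_y⟫`. As `f_xy` is tangential,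
`⟪N_x, f_y⟫ = ⟪N_y, f_x⟫ = 0`, so `N_x = h f*_x` and `N_y = h f*_y`. Differentiating these four
inner products and using `N_xy = N_yx`, `f_xy = f_yx` and `⟪f_x, f_y⟫ = 0` gives `h_x = h_y = 0`
(the Codazzi equations). Since `D` is connected, `h` is a constant, nonzero by the absence of
umbilics, and `N - h f*` is constant as well; thus `f*` lies on a sphere of radius `1 / |h|`.
-/

open RealInnerProductSpace

lemma inner_eq_coords (u v : EuclideanSpace ℝ (Fin 3)) :
    ⟪u, v⟫ = u 0 * v 0 + u 1 * v 1 + u 2 * v 2 := by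
  simp [PiLp.inner_apply, Fin.sum_univ_three, mul_comm]

lemma cross3_inner_left (u v : EuclideanSpace ℝ (Fin 3)) : ⟪cross3 u v, u⟫ = 0 := by
  simp [inner_eq_coords, cross3]; ring

lemma cross3_inner_right (u v : EuclideanSpace ℝ (Fin 3)) : ⟪cross3 u v, v⟫ = 0 := by
  simp [inner_eq_coords, cross3]; ring

/-- Lagrange's identity. -/
lemma cross3_inner_self (u v : EuclideanSpace ℝ (Fin 3)) :
    ⟪cross3 u v, cross3 u v⟫ = ⟪u, u⟫ * ⟪v, v⟫ - ⟪u, v⟫ ^ 2 := by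
  simp only [inner_eq_coords]
  simp [cross3]; ring

/-- Cramer's rule in the frame `u`, `v`, `u × v`; an identity valid for all `u`, `v`, `w`. -/
lemma cross3_expansion (u v w : EuclideanSpace ℝ (Fin 3)) :
    (⟪u, u⟫ * ⟪v, v⟫ - ⟪u, v⟫ ^ 2) • w =
      (⟪w, u⟫ * ⟪v, v⟫ - ⟪w, v⟫ * ⟪u, v⟫) • u + (⟪w, v⟫ * ⟪u, u⟫ - ⟪w, u⟫ * ⟪u, v⟫) • v
        + ⟪w, cross3 u v⟫ • cross3 u v := by
  simp only [inner_eq_coords]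
  ext i
  fin_cases i <;> simp [cross3] <;> ring

/-- Expansion of a vector in the orthogonal frame formed by two orthogonal vectors of the same
length and their unit normal. -/
lemma frame_expansion {u v : EuclideanSpace ℝ (Fin 3)} (huv : ‖u‖ = ‖v‖) (hu : 0 < ‖u‖)
    (ho : ⟪u, v⟫ = 0) (w : EuclideanSpace ℝ (Fin 3)) :
    w = (⟪w, u⟫ * (‖u‖ ^ 2)⁻¹) • u + (⟪w, v⟫ * (‖u‖ ^ 2)⁻¹) • v
      + ⟪w, (‖u‖ ^ 2)⁻¹ • cross3 u v⟫ • (‖u‖ ^ 2)⁻¹ • cross3 u v := by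
  have h := cross3_expansion u v w
  rw [ho, real_inner_self_eq_norm_sq, real_inner_self_eq_norm_sq, ← huv] at h
  have hs : ‖u‖ ^ 2 ≠ 0 := by positivity
  set s := ‖u‖ ^ 2 with hs_def
  have h2 := congrArg (fun z => (s⁻¹ * s⁻¹) • z) h
  simp only [smul_add, smul_smul, inner_smul_right] at h2 ⊢
  rw [show s⁻¹ * s⁻¹ * (s * s - 0 ^ 2) = 1 by field_simp; ring, one_smul] at h2
  refine h2.trans ?_
  congr 1
  · congr 1
    · congr 1; field_simp; ring
    · congr 1; field_simp; ring
  · congr 1; ring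

/-- Product rule for an inner product that is constant on an open set. -/
lemma inner_deriv_of_const {D : Set (ℝ × ℝ)} (hD : IsOpen D)
    {F G : ℝ × ℝ → EuclideanSpace ℝ (Fin 3)} {r : ℝ} (hc : ∀ q ∈ D, ⟪F q, G q⟫ = r)
    {p : ℝ × ℝ} (hp : p ∈ D) (hF : DifferentiableAt ℝ F p) (hG : DifferentiableAt ℝ G p)
    (v : ℝ × ℝ) : ⟪F p, fderiv ℝ G p v⟫ + ⟪fderiv ℝ F p v, G p⟫ = 0 := by
  rw [← fderiv_inner_apply ℝ hF hG]
  have : (fun q => ⟪F q, G q⟫) =ᶠ[nhds p] fun _ => r := by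
    filter_upwards [hD.mem_nhds hp] with q hq using hc q hq
  rw [this.fderiv_eq]; simp

lemma contDiffAt_partial {F : ℝ × ℝ → EuclideanSpace ℝ (Fin 3)} {p : ℝ × ℝ}
    (hF : ContDiffAt ℝ (⊤ : ℕ∞) F p) (v : ℝ × ℝ) :
    ContDiffAt ℝ (⊤ : ℕ∞) (fun q => fderiv ℝ F q v) p :=
  (hF.fderiv_right (m := (⊤ : ℕ∞)) (by exact_mod_cast le_top)).clm_apply contDiffAt_const

/-- Mixed partial derivatives of a smooth map commute. -/
lemma partial_comm {F : ℝ × ℝ → EuclideanSpace ℝ (Fin 3)} {p : ℝ × ℝ}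
    (hF : ContDiffAt ℝ (⊤ : ℕ∞) F p) (v w : ℝ × ℝ) :
    fderiv ℝ (fun q => fderiv ℝ F q v) p w = fderiv ℝ (fun q => fderiv ℝ F q w) p v := by
  have hd : DifferentiableAt ℝ (fderiv ℝ F) p :=
    (hF.fderiv_right (m := (⊤ : ℕ∞)) (by exact_mod_cast le_top)).differentiableAt (by simp)
  have hs : IsSymmSndFDerivAt ℝ F p :=
    hF.isSymmSndFDerivAt (by
      rw [minSmoothness_of_isRCLikeNormedField]
      exact WithTop.coe_le_coe.2 (le_top : (2 : ℕ∞) ≤ ⊤))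
  rw [fderiv_clm_apply hd (differentiableAt_const v), fderiv_clm_apply hd (differentiableAt_const w)]
  simpa using hs w v

lemma contDiffAt_cross3 {F G : ℝ × ℝ → EuclideanSpace ℝ (Fin 3)} {p : ℝ × ℝ}
    (hF : ContDiffAt ℝ (⊤ : ℕ∞) F p) (hG : ContDiffAt ℝ (⊤ : ℕ∞) G p) :
    ContDiffAt ℝ (⊤ : ℕ∞) (fun q => cross3 (F q) (G q)) p := by
  have hF' := contDiffAt_euclidean.1 hF
  have hG' := contDiffAt_euclidean.1 hG
  refine contDiffAt_euclidean.2 fun i => ?_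
  fin_cases i
  · exact ((hF' 1).mul (hG' 2)).sub ((hF' 2).mul (hG' 1))
  · exact ((hF' 2).mul (hG' 0)).sub ((hF' 0).mul (hG' 2))
  · exact ((hF' 0).mul (hG' 1)).sub ((hF' 1).mul (hG' 0))

lemma clm_eq_zero_of_basis {E : Type*} [NormedAddCommGroup E] [NormedSpace ℝ E]
    {L : ℝ × ℝ →L[ℝ] E} (h1 : L (1, 0) = 0) (h2 : L (0, 1) = 0) : L = 0 := by
  ext <;> simp [h1, h2]

/-- **Christoffel's characterization of minimal surfaces among isothermic surfaces.**
Let `D ⊆ ℝ²` be open, connected and simply connected, `f : D → ℝ³` a smooth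
isothermic immersion without umbilic points, with unit normal
`N = (f_x × f_y)/λ²` (`λ = ‖f_x‖ = ‖f_y‖ > 0`), and let `f*` be a Christoffel
dual of `f` (`f*_x = f_x/λ²`, `f*_y = −f_y/λ²`).  Then `f` is minimal
(`⟪N_x,f_x⟫ + ⟪N_y,f_y⟫ = 0` on `D`) if and only if `f*` is contained in a
sphere. -/
theorem minimal_iff_christoffel_dual_in_sphere
    (D : Set (ℝ × ℝ)) (hD : IsOpen D) (hDconn : IsConnected D)
    (hDsc : SimplyConnectedSpace D)
    (f : ℝ × ℝ → EuclideanSpace ℝ (Fin 3))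
    (hf : ContDiffOn ℝ (⊤ : ℕ∞) f D)
    (fx fy : ℝ × ℝ → EuclideanSpace ℝ (Fin 3))
    (hfx : ∀ p, fx p = fderiv ℝ f p (1, 0))
    (hfy : ∀ p, fy p = fderiv ℝ f p (0, 1))
    (hnorm : ∀ p ∈ D, ‖fx p‖ = ‖fy p‖)
    (hpos : ∀ p ∈ D, 0 < ‖fx p‖)
    (horth : ∀ p ∈ D, ⟪fx p, fy p⟫ = 0)
    (hspan : ∀ p ∈ D, fderiv ℝ fx p (0, 1) ∈ Submodule.span ℝ {fx p, fy p})
    -- the unit normal `N = (f_x × f_y)/λ²`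
    (N : ℝ × ℝ → EuclideanSpace ℝ (Fin 3))
    (hN : ∀ p ∈ D, N p = (‖fx p‖ ^ 2)⁻¹ • cross3 (fx p) (fy p))
    -- no umbilic points
    (humb : ∀ p ∈ D, ⟪fderiv ℝ N p (1, 0), fx p⟫ ≠ 0)
    -- `f*` is a Christoffel dual of `f`
    (fstar : ℝ × ℝ → EuclideanSpace ℝ (Fin 3))
    (hstardiff : ∀ p ∈ D, DifferentiableAt ℝ fstar p)
    (hstarx : ∀ p ∈ D, fderiv ℝ fstar p (1, 0) = (‖fx p‖ ^ 2)⁻¹ • fx p)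
    (hstary : ∀ p ∈ D, fderiv ℝ fstar p (0, 1) = -((‖fy p‖ ^ 2)⁻¹ • fy p)) :
    ((∀ p ∈ D, ⟪fderiv ℝ N p (1, 0), fx p⟫ + ⟪fderiv ℝ N p (0, 1), fy p⟫ = 0) ↔
      (∃ (c : EuclideanSpace ℝ (Fin 3)) (ρ : ℝ), 0 < ρ ∧
        ∀ p ∈ D, ‖fstar p - c‖ = ρ)) := by
  have efx : fx = fun q => fderiv ℝ f q (1, 0) := funext hfx
  have efy : fy = fun q => fderiv ℝ f q (0, 1) := funext hfy
  have cf : ∀ p ∈ D, ContDiffAt ℝ (⊤ : ℕ∞) f p := fun p hp => hf.contDiffAt (hD.mem_nhds hp)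
  have cfx : ∀ p ∈ D, ContDiffAt ℝ (⊤ : ℕ∞) fx p := fun p hp => by
    rw [efx]; exact contDiffAt_partial (cf p hp) _
  have cfy : ∀ p ∈ D, ContDiffAt ℝ (⊤ : ℕ∞) fy p := fun p hp => by
    rw [efy]; exact contDiffAt_partial (cf p hp) _
  have cN : ∀ p ∈ D, ContDiffAt ℝ (⊤ : ℕ∞) N p := fun p hp => by
    have h1 : ContDiffAt ℝ (⊤ : ℕ∞) (fun q => (‖fx q‖ ^ 2)⁻¹ • cross3 (fx q) (fy q)) p :=
      (((cfx p hp).norm_sq ℝ).inv (pow_ne_zero 2 (hpos p hp).ne')).smul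
        (contDiffAt_cross3 (cfx p hp) (cfy p hp))
    refine h1.congr_of_eventuallyEq ?_
    filter_upwards [hD.mem_nhds hp] with q hq using hN q hq
  have dfx : ∀ p ∈ D, DifferentiableAt ℝ fx p := fun p hp => (cfx p hp).differentiableAt (by simp)
  have dfy : ∀ p ∈ D, DifferentiableAt ℝ fy p := fun p hp => (cfy p hp).differentiableAt (by simp)
  have dN : ∀ p ∈ D, DifferentiableAt ℝ N p := fun p hp => (cN p hp).differentiableAt (by simp)
  have fxy : ∀ p ∈ D, fderiv ℝ fy p (1, 0) = fderiv ℝ fx p (0, 1) := fun p hp => by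
    rw [efx, efy]; exact partial_comm (cf p hp) _ _
  have Nfx : ∀ p ∈ D, ⟪N p, fx p⟫ = 0 := fun p hp => by
    rw [hN p hp, inner_smul_left, cross3_inner_left, mul_zero]
  have Nfy : ∀ p ∈ D, ⟪N p, fy p⟫ = 0 := fun p hp => by
    rw [hN p hp, inner_smul_left, cross3_inner_right, mul_zero]
  have NN : ∀ p ∈ D, ⟪N p, N p⟫ = 1 := fun p hp => by
    have := (hpos p hp).ne'
    rw [hN p hp, inner_smul_left, inner_smul_right, cross3_inner_self, horth p hp,
      real_inner_self_eq_norm_sq, real_inner_self_eq_norm_sq, ← hnorm p hp]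
    simp
    field_simp
  have expand : ∀ p ∈ D, ∀ w, w = (⟪w, fx p⟫ * (‖fx p‖ ^ 2)⁻¹) • fx p
      + (⟪w, fy p⟫ * (‖fx p‖ ^ 2)⁻¹) • fy p + ⟪w, N p⟫ • N p := fun p hp w => by
    rw [hN p hp]
    exact frame_expansion (hnorm p hp) (hpos p hp) (horth p hp) w
  have invsq : ∀ p ∈ D, (‖fx p‖ ^ 2)⁻¹ * ‖fx p‖ ^ 2 = 1 := fun p hp =>
    inv_mul_cancel₀ (pow_ne_zero 2 (hpos p hp).ne')
  constructor
  · intro hmin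
    have Nfxy : ∀ p ∈ D, ⟪N p, fderiv ℝ fx p (0, 1)⟫ = 0 := fun p hp => by
      obtain ⟨a, b, hab⟩ := Submodule.mem_span_pair.1 (hspan p hp)
      rw [← hab, inner_add_right, inner_smul_right, inner_smul_right, Nfx p hp, Nfy p hp]
      simp
    have Nxfy : ∀ p ∈ D, ⟪fderiv ℝ N p (1, 0), fy p⟫ = 0 := fun p hp => by
      have := inner_deriv_of_const hD Nfy hp (dN p hp) (dfy p hp) (1, 0)
      rwa [fxy p hp, Nfxy p hp, zero_add] at this
    have Nyfx : ∀ p ∈ D, ⟪fderiv ℝ N p (0, 1), fx p⟫ = 0 := fun p hp => by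
      have := inner_deriv_of_const hD Nfx hp (dN p hp) (dfx p hp) (0, 1)
      rwa [Nfxy p hp, zero_add] at this
    have NvN : ∀ p ∈ D, ∀ v, ⟪fderiv ℝ N p v, N p⟫ = 0 := fun p hp v => by
      have := inner_deriv_of_const hD NN hp (dN p hp) (dN p hp) v
      rw [real_inner_comm] at this
      linarith
    set h : ℝ × ℝ → ℝ := fun p => ⟪fderiv ℝ N p (1, 0), fx p⟫ with h_def
    have hy_eq : ∀ p ∈ D, ⟪fderiv ℝ N p (0, 1), fy p⟫ = -h p := fun p hp => by
      have := hmin p hp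
      simp only [h_def]; linarith
    have Nx_eq : ∀ p ∈ D, fderiv ℝ N p (1, 0) = (h p * (‖fx p‖ ^ 2)⁻¹) • fx p := fun p hp => by
      have := expand p hp (fderiv ℝ N p (1, 0))
      rwa [Nxfy p hp, NvN p hp, zero_mul, zero_smul, zero_smul, add_zero, add_zero] at this
    have Ny_eq : ∀ p ∈ D, fderiv ℝ N p (0, 1) = -((h p * (‖fx p‖ ^ 2)⁻¹) • fy p) := fun p hp => by
      have := expand p hp (fderiv ℝ N p (0, 1))
      rwa [Nyfx p hp, NvN p hp, zero_mul, zero_smul, zero_smul, add_zero, zero_add,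
        hy_eq p hp, neg_mul, neg_smul] at this
    have dNv : ∀ p ∈ D, ∀ v, DifferentiableAt ℝ (fun q => fderiv ℝ N q v) p := fun p hp v =>
      (contDiffAt_partial (cN p hp) v).differentiableAt (by simp)
    have dh : ∀ p ∈ D, DifferentiableAt ℝ h p := fun p hp =>
      (dNv p hp _).inner ℝ (dfx p hp)
    -- The Codazzi equations in both directions: `e2` trades `N_xy` for second derivatives of `f`,
    -- and `e3` moves them all onto `f_xy`.
    have h_y : ∀ p ∈ D, fderiv ℝ h p (0, 1) = 0 := fun p hp => by
      have e1 := fderiv_inner_apply ℝ (dNv p hp (1, 0)) (dfx p hp) (0, 1)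
      have e2 := inner_deriv_of_const hD Nyfx hp (dNv p hp (0, 1)) (dfx p hp) (1, 0)
      have e3 := inner_deriv_of_const hD horth hp (dfx p hp) (dfy p hp) (1, 0)
      rw [partial_comm (cN p hp) (1, 0) (0, 1), Nx_eq p hp, inner_smul_left] at e1
      rw [Ny_eq p hp, inner_neg_left, inner_smul_left] at e2
      rw [fxy p hp, real_inner_comm (fy p)] at e3
      simp only [conj_trivial] at e1 e2
      refine e1.trans ?_
      linear_combination e2 + (h p * (‖fx p‖ ^ 2)⁻¹) * e3
    have h_x : ∀ p ∈ D, fderiv ℝ h p (1, 0) = 0 := fun p hp => by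
      have hev : h =ᶠ[nhds p] fun q => -⟪fderiv ℝ N q (0, 1), fy q⟫ := by
        filter_upwards [hD.mem_nhds hp] with q hq
        rw [hy_eq q hq, neg_neg]
      have e1 := fderiv_inner_apply ℝ (dNv p hp (0, 1)) (dfy p hp) (1, 0)
      have e2 := inner_deriv_of_const hD Nxfy hp (dNv p hp (1, 0)) (dfy p hp) (0, 1)
      have e3 := inner_deriv_of_const hD horth hp (dfx p hp) (dfy p hp) (0, 1)
      rw [partial_comm (cN p hp) (0, 1) (1, 0), Ny_eq p hp, inner_neg_left, inner_smul_left,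
        fxy p hp] at e1
      rw [Nx_eq p hp, inner_smul_left] at e2
      rw [real_inner_comm (fy p) (fderiv ℝ fx p (0, 1))] at e3
      simp only [conj_trivial] at e1 e2
      rw [hev.fderiv_eq, fderiv_fun_neg, neg_apply, e1]
      linear_combination -e2 + (h p * (‖fx p‖ ^ 2)⁻¹) * e3
    obtain ⟨a, ha⟩ := hD.exists_is_const_of_fderiv_eq_zero hDconn.isPreconnected
      (fun p hp => (dh p hp).differentiableWithinAt)
      (fun p hp => clm_eq_zero_of_basis (h_x p hp) (h_y p hp))
    obtain ⟨p₀, hp₀⟩ := hDconn.nonempty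
    have ha0 : a ≠ 0 := ha p₀ hp₀ ▸ humb p₀ hp₀
    obtain ⟨b, hb⟩ := hD.exists_is_const_of_fderiv_eq_zero (f := fun q => N q - a • fstar q)
      hDconn.isPreconnected
      (fun p hp => ((dN p hp).sub ((hstardiff p hp).const_smul a)).differentiableWithinAt)
      (fun p hp => by
        have e : fderiv ℝ (fun q => N q - a • fstar q) p
            = fderiv ℝ N p - a • fderiv ℝ fstar p := by
          rw [fderiv_fun_sub (dN p hp) ((hstardiff p hp).fun_const_smul a),
            fderiv_fun_const_smul (hstardiff p hp)]
        rw [e]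
        apply clm_eq_zero_of_basis
        · simp [Nx_eq p hp, hstarx p hp, ha p hp, smul_smul]
        · simp [Ny_eq p hp, hstary p hp, ha p hp, smul_smul, hnorm p hp])
    refine ⟨-(a⁻¹ • b), |a|⁻¹, inv_pos.2 (abs_pos.2 ha0), fun p hp => ?_⟩
    have e : fstar p - -(a⁻¹ • b) = a⁻¹ • N p := by
      rw [← hb p hp, smul_sub, smul_smul, inv_mul_cancel₀ ha0, one_smul]
      abel
    have hN1 : ‖N p‖ = 1 := by
      have := NN p hp
      rw [real_inner_self_eq_norm_sq] at this
      exact (pow_eq_one_iff_of_nonneg (norm_nonneg _) two_ne_zero).1 this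
    rw [e, norm_smul, hN1, mul_one, norm_inv, Real.norm_eq_abs]
  · rintro ⟨c, ρ, -, hsph⟩
    have dF : ∀ p ∈ D, DifferentiableAt ℝ (fun q => fstar q - c) p := fun p hp =>
      (hstardiff p hp).sub_const c
    have FF : ∀ p ∈ D, ⟪fstar p - c, fstar p - c⟫ = ρ ^ 2 := fun p hp => by
      rw [real_inner_self_eq_norm_sq, hsph p hp]
    have Fv : ∀ p ∈ D, ∀ v, ⟪fstar p - c, fderiv ℝ fstar p v⟫ = 0 := fun p hp v => by
      have := inner_deriv_of_const hD FF hp (dF p hp) (dF p hp) v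
      rw [fderiv_sub_const, real_inner_comm (fstar p - c)] at this
      linarith
    have Ffx : ∀ p ∈ D, ⟪fstar p - c, fx p⟫ = 0 := fun p hp => by
      have := Fv p hp (1, 0)
      rw [hstarx p hp, inner_smul_right] at this
      exact (mul_eq_zero.1 this).resolve_left (left_ne_zero_of_mul_eq_one (invsq p hp))
    have Ffy : ∀ p ∈ D, ⟪fstar p - c, fy p⟫ = 0 := fun p hp => by
      have := Fv p hp (0, 1)
      rw [hstary p hp, ← hnorm p hp, inner_neg_right, neg_eq_zero, inner_smul_right] at this
      exact (mul_eq_zero.1 this).resolve_left (left_ne_zero_of_mul_eq_one (invsq p hp))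
    intro p hp
    obtain ⟨σ, hσ⟩ : ∃ σ : ℝ, fstar p - c = σ • N p := by
      refine ⟨⟪fstar p - c, N p⟫, (expand p hp (fstar p - c)).trans ?_⟩
      rw [Ffx p hp, Ffy p hp, zero_mul, zero_smul, zero_smul, zero_add, zero_add]
    have ex := inner_deriv_of_const hD Ffx hp (dF p hp) (dfx p hp) (1, 0)
    have ey := inner_deriv_of_const hD Ffy hp (dF p hp) (dfy p hp) (0, 1)
    have nx := inner_deriv_of_const hD Nfx hp (dN p hp) (dfx p hp) (1, 0)
    have ny := inner_deriv_of_const hD Nfy hp (dN p hp) (dfy p hp) (0, 1)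
    rw [fderiv_sub_const, hσ, hstarx p hp, inner_smul_left, inner_smul_left,
      real_inner_self_eq_norm_sq] at ex
    rw [fderiv_sub_const, hσ, hstary p hp, inner_neg_left, inner_smul_left, inner_smul_left,
      real_inner_self_eq_norm_sq, ← hnorm p hp] at ey
    simp only [conj_trivial] at ex ey
    rw [invsq p hp] at ex ey
    have hσ0 : σ ≠ 0 := by
      rintro rfl
      simp at ex
    refine (mul_eq_zero.1 (?_ : σ * _ = 0)).resolve_left hσ0
    linear_combination σ * nx + σ * ny - ex - ey
end

section
/- (Touching Coins Lemma) Let C₁, C₂, C₃, C₄ be circles in ℝ³, where Cᵢ = {x ∈ ℝ³ : ‖x − cᵢ‖ = ρᵢ, ⟨x − cᵢ, nᵢ⟩ = 0} with center cᵢ ∈ ℝ³, radius ρᵢ > 0 and unit normal nᵢ. Suppose the circles touch cyclically: for each i (indices mod 4) there is a point pᵢ with Cᵢ ∩ Cᵢ₊₁ = {pᵢ}, and at pᵢ the two circles have a common tangent line, i.e. the tangent vectors nᵢ × (pᵢ − cᵢ) and nᵢ₊₁ × (pᵢ − cᵢ₊₁) are parallel. Suppose further that the four contact points p₁, p₂,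 p₃, p₄ are not coplanar, and that the four circles do not all lie on one common sphere. Let S be the (unique) sphere with center O passing through p₁, p₂, p₃, p₄. Then each circle intersects S orthogonally: for each i, the tangent vector nᵢ × (pᵢ − cᵢ) of Cᵢ at pᵢ is parallel to the radius vector pᵢ − O, and likewise the tangent vector nᵢ₊₁ × (pᵢ − cᵢ₊₁) of Cᵢ₊₁ at pᵢ is parallel to pᵢ − O. -/
/-!
Put the origin at `O` and write `a i = p i - O`. The reflection in the perpendicular bisector plane
of two points of a circle maps the circle to itself, hence carries the tangent line at one point to
the tangent line at the other (`IsReflStep`, `circle_step`). Since the contact points are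
equidistant from `O`, these planes pass through `O`, so each reflection preserves both the norm of
a tangent vector `v i` at `p i` and the number `⟪v i, a i⟫`.

Going once around the cycle of four circles, a tangent vector `v₀` at `p 0` returns to a vector
`k • v₀` with `k = ±1` (`cycle_dichotomy`).

* If `k = -1`, then `⟪v₀, a 0⟫ = 0`, so every tangent vector at a contact point is tangent to `S`.
  A circle that is tangent to `S` at one point and meets it in another one lies on `S`
  (`circle_subset_sphere`), so all four circles lie on `S`, which is excluded.
* If `k = 1`, the increments `-lᵢ • (a (i + 1) - a i)` of the tangent vector add up to zero. The
  four edge vectors satisfy, up to scaling, only the relation that their sum is zero, so all `lᵢ`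
  are equal to one `l`. Then `v i + l • a i` is a constant vector, and the reflection property makes
  it orthogonal to every edge, so it is zero: `v i = -l • a i` is radial.
-/


open RealInnerProductSpace

local notation "E3" => EuclideanSpace ℝ (Fin 3)

@[simp] lemma cross3_zero (u v : E3) : cross3 u v 0 = u 1 * v 2 - u 2 * v 1 := rfl
@[simp] lemma cross3_one (u v : E3) : cross3 u v 1 = u 2 * v 0 - u 0 * v 2 := rfl
@[simp] lemma cross3_two (u v : E3) : cross3 u v 2 = u 0 * v 1 - u 1 * v 0 := rfl

/-! ### Reflections exchanging two points -/

/-- The vector `v'` is the image of `v` under the linear reflection that exchanges `a` and `b`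
(for `a ≠ b` of equal norm): the increment is a multiple of `b - a`, with the reflection
coefficient `l = 2 ⟪v, b - a⟫ / ‖b - a‖ ^ 2`. -/
def IsReflStep (a b v v' : E3) : Prop :=
  ∃ l : ℝ, v' = v - l • (b - a) ∧ 2 * ⟪v, b - a⟫ = l * ⟪b - a, b - a⟫

lemma IsReflStep.smul {a b v v' : E3} (h : IsReflStep a b v v') (s : ℝ) :
    IsReflStep a b (s • v) (s • v') := by
  obtain ⟨l, rfl, h2⟩ := h
  refine ⟨s * l, by module, ?_⟩
  rw [real_inner_smul_left]
  linear_combination s * h2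

lemma IsReflStep.inner_self {a b v v' : E3} (h : IsReflStep a b v v') :
    ⟪v', v'⟫ = ⟪v, v⟫ := by
  obtain ⟨l, rfl, h2⟩ := h
  simp only [inner_coord, PiLp.sub_apply, PiLp.smul_apply, smul_eq_mul] at *
  linear_combination (-l) * h2

lemma IsReflStep.inner_eq {a b v v' : E3} (h : IsReflStep a b v v')
    (hab : ⟪a, a⟫ = ⟪b, b⟫) : ⟪v', b⟫ = ⟪v, a⟫ := by
  obtain ⟨l, rfl, h2⟩ := h
  simp only [inner_coord, PiLp.sub_apply, PiLp.smul_apply, smul_eq_mul] at *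
  linear_combination h2 / 2 + l / 2 * hab

/-- The tangent vectors `n × P` and `n × Q` of a circle at two of its points are exchanged, up to
sign, by the reflection that exchanges the points. The vectors `P`, `Q` are the positions of the
points relative to the center. -/
lemma circle_step (n P Q a b : E3) (hd : b - a = Q - P) (hne : P ≠ Q)
    (hP : ⟪P, n⟫ = 0) (hQ : ⟪Q, n⟫ = 0) (hPQ : ⟪P, P⟫ = ⟪Q, Q⟫) :
    IsReflStep a b (cross3 n P) (-cross3 n Q) := by
  have hpos : ⟪Q - P, Q - P⟫ ≠ 0 := by
    rw [Ne, inner_self_eq_zero, sub_eq_zero]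
    exact fun h => hne h.symm
  have hl : (2 * ⟪cross3 n P, Q - P⟫ / ⟪Q - P, Q - P⟫) * ⟪Q - P, Q - P⟫
      = 2 * ⟪cross3 n P, Q - P⟫ := div_mul_cancel₀ _ hpos
  unfold IsReflStep
  rw [hd]
  refine ⟨2 * ⟪cross3 n P, Q - P⟫ / ⟪Q - P, Q - P⟫, ?_, hl.symm⟩
  generalize 2 * ⟪cross3 n P, Q - P⟫ / ⟪Q - P, Q - P⟫ = l at hl
  have hs : ⟪Q - P, Q - P⟫ • (-cross3 n Q) = ⟪Q - P, Q - P⟫ • (cross3 n P - l • (Q - P)) := by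
    -- Equivalent to `(Q - P) × ((Q - P) × (n × (P + Q))) = 0`; the inner double product expands to
    -- `⟪Q - P, P + Q⟫ n - ⟪Q - P, n⟫ (P + Q)`, which vanishes.
    simp only [inner_coord, PiLp.sub_apply, cross3_zero, cross3_one, cross3_two] at *
    ext i
    fin_cases i <;>
      simp only [PiLp.sub_apply, PiLp.smul_apply, PiLp.neg_apply, smul_eq_mul, cross3_zero,
        cross3_one, cross3_two, Fin.zero_eta, Fin.mk_one, Fin.reduceFinMk]
    · linear_combination (Q 0 - P 0) * hl
        + ((Q 1 - P 1) * n 2 - (Q 2 - P 2) * n 1) * (-hPQ)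
        - ((Q 1 - P 1) * (P 2 + Q 2) - (Q 2 - P 2) * (P 1 + Q 1)) * (hQ - hP)
    · linear_combination (Q 1 - P 1) * hl
        + ((Q 2 - P 2) * n 0 - (Q 0 - P 0) * n 2) * (-hPQ)
        - ((Q 2 - P 2) * (P 0 + Q 0) - (Q 0 - P 0) * (P 2 + Q 2)) * (hQ - hP)
    · linear_combination (Q 2 - P 2) * hl
        + ((Q 0 - P 0) * n 1 - (Q 1 - P 1) * n 0) * (-hPQ)
        - ((Q 0 - P 0) * (P 1 + Q 1) - (Q 1 - P 1) * (P 0 + Q 0)) * (hQ - hP)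
  exact smul_right_injective _ hpos hs

/-! ### Circles and spheres -/

/-- The Gram determinant of `(n, P, X)` against `(n, P, m)` is a product of two triple products; the
form below uses that `P` and `X` are orthogonal to the unit vector `n`. -/
lemma gram (n P X m : E3) (hn : ⟪n, n⟫ = 1) (hP : ⟪P, n⟫ = 0) (hX : ⟪X, n⟫ = 0)
    (hm : ⟪cross3 n P, m⟫ = 0) : ⟪P, P⟫ * ⟪X, m⟫ = ⟪X, P⟫ * ⟪P, m⟫ := by
  have key : ⟪cross3 n P, X⟫ * ⟪cross3 n P, m⟫ =
      ⟪n, n⟫ * (⟪P, P⟫ * ⟪X, m⟫ - ⟪P, m⟫ * ⟪X, P⟫)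
      - ⟪P, n⟫ * (⟪P, n⟫ * ⟪X, m⟫ - ⟪P, m⟫ * ⟪X, n⟫)
      + ⟪n, m⟫ * (⟪P, n⟫ * ⟪X, P⟫ - ⟪P, P⟫ * ⟪X, n⟫) := by
    simp only [inner_coord, cross3_zero, cross3_one, cross3_two]
    ring
  rw [hn, hP, hX, hm] at key
  linear_combination -key

/-- A circle that passes through two points `p ≠ q` of a sphere and is tangent to the sphere at `p`
lies on the sphere. -/
lemma circle_subset_sphere (c n O p q x : E3) (ρ R : ℝ) (hn : ‖n‖ = 1)
    (hp : ‖p - c‖ = ρ ∧ ⟪p - c, n⟫ = 0) (hq : ‖q - c‖ = ρ ∧ ⟪q - c, n⟫ = 0)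
    (hx : ‖x - c‖ = ρ ∧ ⟪x - c, n⟫ = 0) (hne : p ≠ q) (hpO : ‖p - O‖ = R) (hqO : ‖q - O‖ = R)
    (ht : ⟪cross3 n (p - c), p - O⟫ = 0) (hρ : 0 < ρ) : ‖x - O‖ = R := by
  have hn1 : ⟪n, n⟫ = 1 := by rw [real_inner_self_eq_norm_sq, hn]; norm_num
  have hPP : ⟪p - c, p - c⟫ = ρ ^ 2 := by rw [real_inner_self_eq_norm_sq, hp.1]
  have hQQ : ⟪q - c, q - c⟫ = ρ ^ 2 := by rw [real_inner_self_eq_norm_sq, hq.1]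
  have hXX : ⟪x - c, x - c⟫ = ρ ^ 2 := by rw [real_inner_self_eq_norm_sq, hx.1]
  have hpR : ⟪p - O, p - O⟫ = R ^ 2 := by rw [real_inner_self_eq_norm_sq, hpO]
  have hqR : ⟪q - O, q - O⟫ = R ^ 2 := by rw [real_inner_self_eq_norm_sq, hqO]
  have expand (y : E3) :
      ⟪y - O, y - O⟫ = ⟪y - c, y - c⟫ + 2 * ⟪y - c, c - O⟫ + ⟪c - O, c - O⟫ := by
    simp only [inner_coord, PiLp.sub_apply]; ring
  have hm : ⟪cross3 n (p - c), c - O⟫ = 0 := by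
    rw [← ht]
    simp only [inner_coord, PiLp.sub_apply, cross3_zero, cross3_one, cross3_two]; ring
  have gX := gram n (p - c) (x - c) (c - O) hn1 hp.2 hx.2 hm
  have gQ := gram n (p - c) (q - c) (c - O) hn1 hp.2 hq.2 hm
  have eP := expand p
  have eQ := expand q
  have eX := expand x
  have hQm : ⟪q - c, c - O⟫ = ⟪p - c, c - O⟫ := by linarith
  have hd : ⟪q - p, q - p⟫ = 2 * (⟪p - c, p - c⟫ - ⟪q - c, p - c⟫) := by
    have : ⟪q - p, q - p⟫ = ⟪p - c, p - c⟫ + ⟪q - c, q - c⟫ - 2 * ⟪q - c, p - c⟫ := by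
      simp only [inner_coord, PiLp.sub_apply]; ring
    linarith
  have hd0 : ⟪q - p, q - p⟫ ≠ 0 := by
    rw [Ne, inner_self_eq_zero, sub_eq_zero]
    exact fun h => hne h.symm
  have hPm : ⟪p - c, c - O⟫ = 0 := by
    rw [hQm] at gQ
    refine (mul_eq_zero.1 (?_ : ⟪q - p, q - p⟫ * ⟪p - c, c - O⟫ = 0)).resolve_left hd0
    rw [hd]
    linear_combination 2 * gQ
  have hXm : ⟪x - c, c - O⟫ = 0 := by
    rw [hPm, hPP, mul_zero] at gX
    exact (mul_eq_zero.1 gX).resolve_left (by positivity)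
  have hR : 0 ≤ R := hpO ▸ norm_nonneg _
  have hsq : ‖x - O‖ ^ 2 = R ^ 2 := by
    rw [← real_inner_self_eq_norm_sq]; linarith
  exact (sq_eq_sq₀ (norm_nonneg _) hR).1 hsq

/-! ### Transport around the quadrilateral -/

/-- Four reflection steps along a closed quadrilateral that return `v₀` to a multiple of itself:
the transported vectors are either all orthogonal to the vertices or all parallel to them. The
hypotheses `hlin` and `hperp` are the two consequences of affine independence of the vertices that
are needed. -/
lemma cycle_dichotomy (a₀ a₁ a₂ a₃ v₀ v₁ v₂ v₃ : E3) (k r : ℝ)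
    (hlin : ∀ x₁ x₂ x₃ x₄ : ℝ,
      x₁ • (a₁ - a₀) + x₂ • (a₂ - a₁) + x₃ • (a₃ - a₂) + x₄ • (a₀ - a₃) = 0 →
      x₁ = x₄ ∧ x₂ = x₄ ∧ x₃ = x₄)
    (hperp : ∀ w : E3, ⟪w, a₁ - a₀⟫ = 0 → ⟪w, a₂ - a₁⟫ = 0 → ⟪w, a₃ - a₂⟫ = 0 → w = 0)
    (h₀ : ⟪a₀, a₀⟫ = r) (h₁ : ⟪a₁, a₁⟫ = r) (h₂ : ⟪a₂, a₂⟫ = r) (h₃ : ⟪a₃, a₃⟫ = r)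
    (s₁ : IsReflStep a₀ a₁ v₀ v₁) (s₂ : IsReflStep a₁ a₂ v₁ v₂) (s₃ : IsReflStep a₂ a₃ v₂ v₃)
    (s₄ : IsReflStep a₃ a₀ v₃ (k • v₀)) (hv : v₀ ≠ 0) :
    (⟪v₀, a₀⟫ = 0 ∧ ⟪v₁, a₁⟫ = 0 ∧ ⟪v₂, a₂⟫ = 0 ∧ ⟪v₃, a₃⟫ = 0) ∨
      ∃ l : ℝ, v₀ = l • a₀ ∧ v₁ = l • a₁ ∧ v₂ = l • a₂ ∧ v₃ = l • a₃ := by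
  have i₁ := s₁.inner_eq (h₀.trans h₁.symm)
  have i₂ := s₂.inner_eq (h₁.trans h₂.symm)
  have i₃ := s₃.inner_eq (h₂.trans h₃.symm)
  have i₄ := s₄.inner_eq (h₃.trans h₀.symm)
  have hk : k ^ 2 = 1 := by
    have hn := s₄.inner_self.trans (s₃.inner_self.trans (s₂.inner_self.trans s₁.inner_self))
    have h0 : ⟪v₀, v₀⟫ ≠ 0 := by rwa [Ne, inner_self_eq_zero]
    rw [real_inner_smul_left, real_inner_smul_right] at hn
    apply mul_right_cancel₀ h0
    linear_combination hn
  rcases eq_or_eq_neg_of_sq_eq_sq k 1 (by rw [hk, one_pow]) with rfl | rfl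
  · right
    obtain ⟨l₁, e₁, f₁⟩ := s₁
    obtain ⟨l₂, e₂, f₂⟩ := s₂
    obtain ⟨l₃, e₃, f₃⟩ := s₃
    obtain ⟨l, e₄, f₄⟩ := s₄
    obtain ⟨hl₁, hl₂, hl₃⟩ := hlin l₁ l₂ l₃ l (by
      rw [one_smul, e₃, e₂, e₁] at e₄
      have := sub_eq_zero.2 e₄
      rw [← this]
      module)
    rw [hl₁] at e₁ f₁
    rw [hl₂] at e₂ f₂
    rw [hl₃] at e₃ f₃
    have hw : v₀ + l • a₀ = 0 := by
      subst e₁ e₂ e₃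
      simp only [inner_coord, PiLp.sub_apply, PiLp.smul_apply, smul_eq_mul] at *
      apply hperp <;> simp only [PiLp.smul_apply, PiLp.add_apply, smul_eq_mul]
      · linear_combination f₁ / 2 + l / 2 * (h₁ - h₀)
      · linear_combination f₂ / 2 + l / 2 * (h₂ - h₁)
      · linear_combination f₃ / 2 + l / 2 * (h₃ - h₂)
    have g₀ : v₀ = -l • a₀ := by rw [neg_smul]; exact eq_neg_of_add_eq_zero_left hw
    have g₁ : v₁ = -l • a₁ := by rw [e₁, g₀]; module
    have g₂ : v₂ = -l • a₂ := by rw [e₂, g₁]; module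
    have g₃ : v₃ = -l • a₃ := by rw [e₃, g₂]; module
    exact ⟨-l, g₀, g₁, g₂, g₃⟩
  · left
    rw [real_inner_smul_left] at i₄
    refine ⟨?_, ?_, ?_, ?_⟩ <;> linarith

/-! ### Affine independence of the contact points -/

/-- The contact points, indexed cyclically, are affinely independent. -/
lemma affineIndependent_of_not_coplanar (p : ZMod 4 → E3)
    (h : ¬ Coplanar ℝ ({p 0, p 1, p 2, p 3} : Set E3)) : AffineIndependent ℝ p := by
  by_contra hni
  apply h
  have hr : Set.range p = {p 0, p 1, p 2, p 3} := by
    ext x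
    constructor
    · rintro ⟨i, rfl⟩
      fin_cases i
      · exact Or.inl rfl
      · exact Or.inr (Or.inl rfl)
      · exact Or.inr (Or.inr (Or.inl rfl))
      · exact Or.inr (Or.inr (Or.inr rfl))
    · rintro (rfl | rfl | rfl | rfl) <;> exact Set.mem_range_self _
  have := (finrank_vectorSpan_le_iff_not_affineIndependent ℝ p (n := 2) (ZMod.card 4)).2 hni
  rw [← hr, coplanar_iff_finrank_le_two]
  exact this

lemma edges_relation (p : ZMod 4 → E3) (h : AffineIndependent ℝ p) (O : E3) (x₁ x₂ x₃ x₄ : ℝ)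
    (hx : x₁ • ((p 1 - O) - (p 0 - O)) + x₂ • ((p 2 - O) - (p 1 - O))
      + x₃ • ((p 3 - O) - (p 2 - O)) + x₄ • ((p 0 - O) - (p 3 - O)) = 0) :
    x₁ = x₄ ∧ x₂ = x₄ ∧ x₃ = x₄ := by
  have sum4 {M : Type} [AddCommMonoid M] (f : ZMod 4 → M) :
      ∑ i, f i = f 0 + f 1 + f 2 + f 3 := Fin.sum_univ_four f
  rw [affineIndependent_iff] at h
  -- Summation by parts: the coefficients of the vertices are differences of those of the edges.
  let w : ZMod 4 → ℝ := (![x₄ - x₁, x₁ - x₂, x₂ - x₃, x₃ - x₄] : Fin 4 → ℝ)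
  have w0 : w 0 = x₄ - x₁ := rfl
  have w1 : w 1 = x₁ - x₂ := rfl
  have w2 : w 2 = x₂ - x₃ := rfl
  have w3 : w 3 = x₃ - x₄ := rfl
  have hw := h Finset.univ w ((sum4 w).trans (by rw [w0, w1, w2, w3]; ring))
    (by rw [sum4, w0, w1, w2, w3, ← hx]; module)
  have z0 := hw 0 (Finset.mem_univ _)
  have z1 := hw 1 (Finset.mem_univ _)
  have z3 := hw 3 (Finset.mem_univ _)
  rw [w0] at z0
  rw [w1] at z1
  rw [w3] at z3
  refine ⟨?_, ?_, ?_⟩ <;> linarith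

lemma eq_zero_of_perp_edges (p : ZMod 4 → E3) (h : AffineIndependent ℝ p) (O w : E3)
    (h1 : ⟪w, (p 1 - O) - (p 0 - O)⟫ = 0) (h2 : ⟪w, (p 2 - O) - (p 1 - O)⟫ = 0)
    (h3 : ⟪w, (p 3 - O) - (p 2 - O)⟫ = 0) : w = 0 := by
  have htop : vectorSpan ℝ (Set.range p) = ⊤ :=
    h.vectorSpan_eq_top_of_card_eq_finrank_add_one (by
      rw [finrank_euclideanSpace_fin]; exact ZMod.card 4)
  simp only [inner_sub_right] at h1 h2 h3
  have hle : vectorSpan ℝ (Set.range p) ≤ (ℝ ∙ w)ᗮ := by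
    rw [vectorSpan_range_eq_span_range_vsub_right ℝ p 0, Submodule.span_le]
    rintro _ ⟨i, rfl⟩
    rw [SetLike.mem_coe, Submodule.mem_orthogonal_singleton_iff_inner_right]
    change ⟪w, p i - p 0⟫ = 0
    rw [inner_sub_right]
    fin_cases i
    · exact sub_self _
    · change ⟪w, p 1⟫ - _ = 0
      linarith
    · change ⟪w, p 2⟫ - _ = 0
      linarith
    · change ⟪w, p 3⟫ - _ = 0
      linarith
  rw [htop] at hle
  have hmem := hle (Submodule.mem_top (x := w))
  rw [Submodule.mem_orthogonal_singleton_iff_inner_right] at hmem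
  exact inner_self_eq_zero.1 hmem

/-! ### Touching circles -/

/-- The tangent vector at a point of a circle does not vanish. -/
lemma cross3_ne_zero (n P : E3) (hn : ‖n‖ = 1) (hP : P ≠ 0) (h : ⟪P, n⟫ = 0) :
    cross3 n P ≠ 0 := by
  intro h0
  have hn1 : ⟪n, n⟫ = 1 := by rw [real_inner_self_eq_norm_sq, hn]; norm_num
  have lag : ⟪cross3 n P, cross3 n P⟫ = ⟪n, n⟫ * ⟪P, P⟫ - ⟪P, n⟫ ^ 2 := by
    simp only [inner_coord, cross3_zero, cross3_one, cross3_two]; ring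
  rw [h0, inner_zero_left, hn1, h] at lag
  apply hP
  rw [← inner_self_eq_zero (𝕜 := ℝ)]
  linarith

/-- **Touching Coins Lemma.**
Four circles in `ℝ³` (with centers `c i`, radii `ρ i > 0`, unit normals `n i`)
touch cyclically at points `p i` (with `C i ∩ C (i+1) = {p i}` and common
tangent lines there).  If the four contact points are not coplanar and the
four circles do not all lie on one common sphere, then each circle intersects
the sphere `S` through `p 0, p 1, p 2, p 3` (center `O`) orthogonally: the
tangent vectors of the two circles at each contact point `p i` are parallel
to the radius vector `p i - O`. -/
theorem touching_coins
    (c : ZMod 4 → EuclideanSpace ℝ (Fin 3)) (ρ : ZMod 4 → ℝ)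
    (n : ZMod 4 → EuclideanSpace ℝ (Fin 3)) (p : ZMod 4 → EuclideanSpace ℝ (Fin 3))
    (hρ : ∀ i, 0 < ρ i) (hn : ∀ i, ‖n i‖ = 1)
    (C : ZMod 4 → Set (EuclideanSpace ℝ (Fin 3)))
    (hC : ∀ i, C i = {x | ‖x - c i‖ = ρ i ∧ ⟪x - c i, n i⟫ = 0})
    -- the circles touch cyclically at the points `p i`
    (htouch : ∀ i, C i ∩ C (i + 1) = {p i})
    (htangent : ∀ i, ∃ t : ℝ,
      cross3 (n i) (p i - c i) = t • cross3 (n (i + 1)) (p i - c (i + 1)))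
    -- the four contact points are not coplanar
    (hnotcoplanar : ¬ Coplanar ℝ ({p 0, p 1, p 2, p 3} : Set (EuclideanSpace ℝ (Fin 3))))
    -- the four circles do not all lie on one common sphere
    (hnotsphere : ¬ ∃ (O' : EuclideanSpace ℝ (Fin 3)) (R' : ℝ),
      ∀ i, C i ⊆ {x | ‖x - O'‖ = R'})
    -- `S` is the sphere with center `O` through the four contact points
    (O : EuclideanSpace ℝ (Fin 3)) (R : ℝ) (hS : ∀ i, ‖p i - O‖ = R) :
    ∀ i, (∃ t : ℝ, cross3 (n i) (p i - c i) = t • (p i - O)) ∧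
      (∃ t : ℝ, cross3 (n (i + 1)) (p i - c (i + 1)) = t • (p i - O)) := by
  have hmem : ∀ i, p i ∈ C i ∧ p i ∈ C (i + 1) := fun i => by
    have : p i ∈ C i ∩ C (i + 1) := by rw [htouch i]; exact Set.mem_singleton _
    exact this
  have hA : ∀ i, ‖p i - c i‖ = ρ i ∧ ⟪p i - c i, n i⟫ = 0 := fun i => by
    have := (hmem i).1
    rwa [hC] at this
  have hB : ∀ i, ‖p i - c (i + 1)‖ = ρ (i + 1) ∧ ⟪p i - c (i + 1), n (i + 1)⟫ = 0 := fun i => by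
    have := (hmem i).2
    rwa [hC] at this
  have hind := affineIndependent_of_not_coplanar p hnotcoplanar
  have hne : ∀ i, p i ≠ p (i + 1) := fun i h => by
    exact (by decide : ∀ j : ZMod 4, j ≠ j + 1) i (hind.injective h)
  have hsq : ∀ i, ⟪p i - O, p i - O⟫ = R ^ 2 := fun i => by
    rw [real_inner_self_eq_norm_sq, hS]
  have hU0 : ∀ i, cross3 (n (i + 1)) (p i - c (i + 1)) ≠ 0 := fun i =>
    cross3_ne_zero _ _ (hn _) (norm_pos_iff.1 ((hB i).1 ▸ hρ _)) (hB i).2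
  have hT0 : ∀ i, cross3 (n i) (p i - c i) ≠ 0 := fun i =>
    cross3_ne_zero _ _ (hn _) (norm_pos_iff.1 ((hA i).1 ▸ hρ _)) (hA i).2
  choose t ht using htangent
  have ht0 : ∀ i, t i ≠ 0 := fun i h => hT0 i (by rw [ht, h, zero_smul])
  have hstep : ∀ i, IsReflStep (p i - O) (p (i + 1) - O) (cross3 (n (i + 1)) (p i - c (i + 1)))
      (-cross3 (n (i + 1)) (p (i + 1) - c (i + 1))) := fun i =>
    circle_step _ _ _ _ _ (by abel) (fun h => hne i (sub_left_injective h)) (hB i).2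
      (hA (i + 1)).2 (by
        rw [real_inner_self_eq_norm_sq, real_inner_self_eq_norm_sq, (hB i).1, (hA (i + 1)).1])
  -- `U i` is the tangent vector at `p i` of the circle `C (i + 1)`.
  set U : ZMod 4 → EuclideanSpace ℝ (Fin 3) := fun i => cross3 (n (i + 1)) (p i - c (i + 1))
  have hstepU : ∀ i, IsReflStep (p i - O) (p (i + 1) - O) (U i) (-t (i + 1) • U (i + 1)) :=
    fun i => by
      have := hstep i
      rw [ht (i + 1), ← neg_smul] at this
      exact this
  have s1 := hstepU 0
  have s2 := (hstepU 1).smul (-t 1)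
  have s3 := (hstepU 2).smul (-t 1 * -t 2)
  have s4 := (hstepU 3).smul (-t 1 * -t 2 * -t 3)
  rw [show (0 : ZMod 4) + 1 = 1 from rfl] at s1
  rw [show (1 : ZMod 4) + 1 = 2 from rfl, smul_smul] at s2
  rw [show (2 : ZMod 4) + 1 = 3 from rfl, smul_smul] at s3
  rw [show (3 : ZMod 4) + 1 = 0 from rfl, smul_smul] at s4
  have n1 : -t 1 ≠ 0 := neg_ne_zero.2 (ht0 1)
  have n2 : -t 1 * -t 2 ≠ 0 := mul_ne_zero n1 (neg_ne_zero.2 (ht0 2))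
  have n3 : -t 1 * -t 2 * -t 3 ≠ 0 := mul_ne_zero n2 (neg_ne_zero.2 (ht0 3))
  rcases cycle_dichotomy _ _ _ _ _ _ _ _ _ _ (edges_relation p hind O)
    (eq_zero_of_perp_edges p hind O) (hsq 0) (hsq 1) (hsq 2) (hsq 3) s1 s2 s3 s4 (hU0 0)
    with ⟨q0, q1, q2, q3⟩ | ⟨l, q0, q1, q2, q3⟩
  · exfalso
    rw [real_inner_smul_left] at q1 q2 q3
    have hperp : ∀ i, ⟪U i, p i - O⟫ = 0 := by
      intro i
      fin_cases i
      · exact q0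
      · exact (mul_eq_zero.1 q1).resolve_left n1
      · exact (mul_eq_zero.1 q2).resolve_left n2
      · exact (mul_eq_zero.1 q3).resolve_left n3
    have hsub : ∀ i, C (i + 1) ⊆ {x | ‖x - O‖ = R} := by
      intro i x hx
      rw [hC] at hx
      exact circle_subset_sphere _ _ O (p i) (p (i + 1)) x _ R (hn (i + 1)) (hB i) (hA (i + 1)) hx
        (hne i) (hS _) (hS _) (hperp i) (hρ _)
    exact hnotsphere ⟨O, R, fun i => by simpa using hsub (i - 1)⟩
  · have hrad : ∀ i, ∃ s : ℝ, U i = s • (p i - O) := by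
      intro i
      fin_cases i
      · exact ⟨l, q0⟩
      · exact ⟨_, by rw [mul_smul]; exact (eq_inv_smul_iff₀ n1).2 q1⟩
      · exact ⟨_, by rw [mul_smul]; exact (eq_inv_smul_iff₀ n2).2 q2⟩
      · exact ⟨_, by rw [mul_smul]; exact (eq_inv_smul_iff₀ n3).2 q3⟩
    intro i
    obtain ⟨s, hs⟩ := hrad i
    refine ⟨⟨t i * s, ?_⟩, s, hs⟩
    rw [ht i, mul_smul, ← hs]
end

section
/- Let n ≥ 2, let N ∈ ℝ³ be a unit vector, let v₁, …, v_{2n} ∈ ℝ³ be unit vectors orthogonal to N (indices cyclic modulo 2n), and let r₁, …, r_{2n} > 0 satisfy Σ_{j=1}^{2n} (−1)^j (1/r_j + 1/r_{j+1}) v_j = 0. For real numbers φ and θ define the rotated unit vectors v_j^{(φ)} := cos φ · v_j + sin φ cos θ · (N × v_j) + sin φ sin θ · N. Then Σ_{j=1}^{2n} (−1)^j (1/r_j + 1/r_{j+1}) v_j^{(φ)} = 0. -/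
/-!
The rotated edge `v j ^ (φ)` is a fixed linear image of `v j` plus the fixed vector
`(sin φ sin θ) • N`. The linear part of the sum vanishes because the original dual polygon closes
(`cross3_sum_smul` gives linearity of the cross product). The coefficient of the remaining multiple
of `N` is the alternating cyclic sum of `1 / r j + 1 / r (j + 1)`, in which each `1 / r j` occurs
twice with opposite signs because the number `2 * n` of edges is even
(`sum_alternating_add_shift`).
-/

open RealInnerProductSpace

lemma cross3_sum_smul {ι : Type*} (s : Finset ι) (N : EuclideanSpace ℝ (Fin 3)) (c : ι → ℝ)
    (v : ι → EuclideanSpace ℝ (Fin 3)) :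
    ∑ j ∈ s, c j • cross3 N (v j) = cross3 N (∑ j ∈ s, c j • v j) := by
  ext i
  fin_cases i <;>
  · simp only [cross3, WithLp.equiv_symm_apply, WithLp.ofLp_sum, WithLp.ofLp_smul,
      Finset.sum_apply, Pi.smul_apply, smul_eq_mul, Finset.mul_sum, ← Finset.sum_sub_distrib]
    refine Finset.sum_congr rfl fun j _ => ?_
    simp
    ring

/-- The sign `(-1) ^ j.val` alternates around the whole cycle, including at the wrap-around from
`2 * n - 1` to `0`, because the length of the cycle is even. -/
lemma neg_one_pow_val_add_one (n : ℕ) [NeZero (2 * n)] (hn : 2 ≤ n) (j : ZMod (2 * n)) :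
    (-1 : ℝ) ^ (j + 1).val = -(-1 : ℝ) ^ j.val := by
  have : Fact (1 < 2 * n) := ⟨by omega⟩
  rw [ZMod.val_add, ZMod.val_one, neg_one_pow_eq_pow_mod_two,
    Nat.mod_mod_of_dvd _ (Dvd.intro n rfl), ← neg_one_pow_eq_pow_mod_two, pow_succ]
  ring

lemma sum_alternating_add_shift (n : ℕ) [NeZero (2 * n)] (hn : 2 ≤ n) (a : ZMod (2 * n) → ℝ) :
    ∑ j : ZMod (2 * n), (-1 : ℝ) ^ j.val * (a j + a (j + 1)) = 0 := by
  have shift := Equiv.sum_comp (Equiv.addRight (1 : ZMod (2 * n)))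
    (fun j => (-1 : ℝ) ^ j.val * a j)
  simp only [Equiv.coe_addRight, neg_one_pow_val_add_one n hn, neg_mul,
    Finset.sum_neg_distrib] at shift
  simp only [mul_add, Finset.sum_add_distrib]
  linarith

/-- **The rotated dual polygon still closes up (associated family).**
Let `N ∈ ℝ³` be a unit vector, `v j` (indices cyclic mod `2n`, `n ≥ 2`) unit
vectors orthogonal to `N`, and `r j > 0` with
`∑ (-1)^j (1/r j + 1/r (j+1)) • v j = 0`.  For reals `φ, θ` let
`v j ^ (φ) = cos φ • v j + sin φ cos θ • (N × v j) + sin φ sin θ • N`.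
Then `∑ (-1)^j (1/r j + 1/r (j+1)) • v j ^ (φ) = 0`. -/
theorem rotated_dual_polygon_closes
    (n : ℕ) [NeZero (2 * n)] (hn : 2 ≤ n)
    (N : EuclideanSpace ℝ (Fin 3)) (hN : ‖N‖ = 1)
    (v : ZMod (2 * n) → EuclideanSpace ℝ (Fin 3))
    (hv : ∀ j, ‖v j‖ = 1) (hvN : ∀ j, ⟪v j, N⟫ = 0)
    (r : ZMod (2 * n) → ℝ) (hr : ∀ j, 0 < r j)
    (hclosed : ∑ j : ZMod (2 * n), ((-1 : ℝ) ^ j.val * ((r j)⁻¹ + (r (j + 1))⁻¹)) • v j = 0)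
    (φ θ : ℝ) :
    ∑ j : ZMod (2 * n), ((-1 : ℝ) ^ j.val * ((r j)⁻¹ + (r (j + 1))⁻¹)) •
      (Real.cos φ • v j + (Real.sin φ * Real.cos θ) • cross3 N (v j) +
        (Real.sin φ * Real.sin θ) • N) = 0 := by
  have cross_zero : cross3 N 0 = 0 := by
    simpa using (cross3_sum_smul (∅ : Finset ℕ) N 0 0).symm
  have hcross := cross3_sum_smul Finset.univ N
    (fun j : ZMod (2 * n) => (-1 : ℝ) ^ j.val * ((r j)⁻¹ + (r (j + 1))⁻¹)) v
  rw [hclosed, cross_zero] at hcross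
  have hcoeff := sum_alternating_add_shift n hn (fun j => (r j)⁻¹)
  simp only [smul_add, Finset.sum_add_distrib, smul_comm _ (Real.cos φ),
    smul_comm _ (Real.sin φ * Real.cos θ), ← Finset.smul_sum, ← Finset.sum_smul]
  rw [hclosed, hcross, hcoeff]
  simp
end

section
/- Let r₁ ∈ (0, π) and r₂ ∈ (0, π/2), and set ρ₁ = log(tan(r₁/2)) and ρ₂ = log(tan(r₂/2)). Then arctan(tan r₂ / sin r₁) = arctan(e^{ρ₂ − ρ₁}) + arctan(e^{ρ₂ + ρ₁}). -/
/-! With `tᵢ = tan (rᵢ / 2) > 0` the two exponentials are `t₂ / t₁` and `t₂ * t₁`, whose product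
`t₂ ^ 2` is less than `1` because `r₂ < π / 2`. Hence the arctangent addition formula applies without
a correction by `π`, and the half-angle formulas `tan r₂ = 2 t₂ / (1 - t₂ ^ 2)` and
`sin r₁ = 2 t₁ / (1 + t₁ ^ 2)` identify the resulting argument with `tan r₂ / sin r₁`. -/

/-- **Key trigonometric identity for the spherical circle pattern functional.**
For `r₁ ∈ (0, π)`, `r₂ ∈ (0, π/2)` and `ρᵢ = log tan(rᵢ/2)`:
`arctan(tan r₂ / sin r₁) = arctan e^{ρ₂−ρ₁} + arctan e^{ρ₂+ρ₁}`. -/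
theorem arctan_identity_spherical
    (r₁ r₂ ρ₁ ρ₂ : ℝ)
    (hr₁ : r₁ ∈ Set.Ioo 0 Real.pi) (hr₂ : r₂ ∈ Set.Ioo 0 (Real.pi / 2))
    (hρ₁ : ρ₁ = Real.log (Real.tan (r₁ / 2)))
    (hρ₂ : ρ₂ = Real.log (Real.tan (r₂ / 2))) :
    Real.arctan (Real.tan r₂ / Real.sin r₁) =
      Real.arctan (Real.exp (ρ₂ - ρ₁)) + Real.arctan (Real.exp (ρ₂ + ρ₁)) := by
  obtain ⟨h1, h1'⟩ := hr₁
  obtain ⟨h2, h2'⟩ := hr₂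
  have ht₁ : 0 < Real.tan (r₁ / 2) := Real.tan_pos_of_pos_of_lt_pi_div_two (by linarith) (by linarith)
  have ht₂ : 0 < Real.tan (r₂ / 2) := Real.tan_pos_of_pos_of_lt_pi_div_two (by linarith) (by linarith)
  have ht₂' : Real.tan (r₂ / 2) < 1 := by
    rw [← Real.tan_pi_div_four]
    exact Real.tan_lt_tan_of_lt_of_lt_pi_div_two (by linarith) (by linarith) (by linarith)
  have htan : Real.tan r₂ = 2 * Real.tan (r₂ / 2) / (1 - Real.tan (r₂ / 2) ^ 2) := by
    rw [← Real.tan_two_mul, mul_div_cancel₀ r₂ two_ne_zero]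
  have hsin : Real.sin r₁ = 2 * Real.tan (r₁ / 2) / (1 + Real.tan (r₁ / 2) ^ 2) := by
    have hc : 0 < Real.cos (r₁ / 2) := Real.cos_pos_of_mem_Ioo ⟨by linarith, by linarith⟩
    have hs : Real.sin r₁ = 2 * Real.sin (r₁ / 2) * Real.cos (r₁ / 2) := by
      rw [← Real.sin_two_mul, mul_div_cancel₀ r₁ two_ne_zero]
    rw [hs, Real.tan_eq_sin_div_cos]
    field_simp
    rw [Real.cos_sq_add_sin_sq, mul_one]
  rw [hρ₁, hρ₂, Real.exp_sub, Real.exp_add, Real.exp_log ht₁, Real.exp_log ht₂, htan, hsin]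
  generalize Real.tan (r₁ / 2) = t₁ at *
  generalize Real.tan (r₂ / 2) = t₂ at *
  have hprod : t₂ / t₁ * (t₂ * t₁) = t₂ ^ 2 := by field_simp
  have hlt : t₂ ^ 2 < 1 := by nlinarith
  have hne : 1 - t₂ ^ 2 ≠ 0 := by linarith
  rw [Real.arctan_add (by rw [hprod]; exact hlt), hprod]
  congr 1
  field_simp
end

section
/- Let V be a finite set, G a finite simple graph on V with edge set E, and Φ : V → ℝ. Define F : ℝ → ℝ by F(x) = ∫_{−∞}^x arctan(eᵘ) du (this improper integral converges), and define S : (V → ℝ) → ℝ by S(ρ) = Σ_{{j,k}∈E} [F(ρ_k − ρ_j) + F(ρ_j − ρ_k) − F(ρ_j + ρ_k) − F(−ρ_j − ρ_k) − π(ρ_j + ρ_k)] + Σ_{j∈V} Φ(j) ρ_j. Then S is differentiable, and for every j ∈ V its partial derivative is ∂S/∂ρ_j = Φ(j) − 2 Σ_{k adjacent to j} (arctan(e^{ρ_k − ρ_j}) + arctan(e^{ρ_k + ρ_j})). Consequently, ρ is a critical point of S if and only if for every j ∈ V: 2 Σ_{k adjacent to j} (arctan(e^{ρ_k − ρ_j})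 + arctan(e^{ρ_k + ρ_j})) = Φ(j). -/
/-!
By `0 ≤ arctan (eᵘ) ≤ eᵘ` the integral defining `F` converges, and the fundamental theorem of
calculus gives `F' x = arctan (eˣ)` (`hasDerivAt_Fint`). Differentiating the summand of an edge
`{j, k}` with respect to `ρ_j` and using `arctan (e⁻ˣ) = π / 2 - arctan (eˣ)`, the constants cancel
against `-π` and what is left is `-2 (arctan e^{ρ_k - ρ_j} + arctan e^{ρ_k + ρ_j})`
(`exists_hasFDerivAt_edge`). Only the edges at `j` contribute to the `j`-th partial derivative, and
they are in bijection with the neighbours of `j` (`sum_edgeFinset_eq_sum_neighborFinset`). A linear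
form on `V → ℝ` vanishes iff it vanishes on the standard basis, whence the critical point equations.
-/

open MeasureTheory

/-- `F(x) = ∫_{−∞}^x arctan(eᵘ) du` (equal to `Im Li₂(i eˣ)`). -/
noncomputable def Fint (x : ℝ) : ℝ := ∫ u in Set.Iio x, Real.arctan (Real.exp u)

/-- The variational functional `S` for orthogonal circle patterns in the sphere:
`S(ρ) = ∑_{{j,k} ∈ E} [F(ρ_k−ρ_j) + F(ρ_j−ρ_k) − F(ρ_j+ρ_k) − F(−ρ_j−ρ_k)
− π(ρ_j+ρ_k)] + ∑_j Φ(j) ρ_j`. -/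
noncomputable def circlePatternFunctional {V : Type*} [Fintype V] [DecidableEq V]
    (G : SimpleGraph V) [DecidableRel G.Adj] (Φ : V → ℝ) (ρ : V → ℝ) : ℝ :=
  (∑ e ∈ G.edgeFinset,
    Sym2.lift ⟨fun j k =>
      Fint (ρ k - ρ j) + Fint (ρ j - ρ k) - Fint (ρ j + ρ k) - Fint (-ρ j - ρ k)
        - Real.pi * (ρ j + ρ k),
      fun j k => by ring_nf⟩ e)
  + ∑ j, Φ j * ρ j

theorem arctan_exp_le_exp (u : ℝ) : Real.arctan (Real.exp u) ≤ Real.exp u := by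
  have h := Real.le_tan (Real.arctan_nonneg.2 (Real.exp_pos u).le) (Real.arctan_lt_pi_div_two _)
  rwa [Real.tan_arctan] at h

theorem continuous_arctan_exp : Continuous fun u : ℝ => Real.arctan (Real.exp u) :=
  Real.continuous_arctan.comp Real.continuous_exp

theorem integrableOn_arctan_exp_Iic (x : ℝ) :
    IntegrableOn (fun u => Real.arctan (Real.exp u)) (Set.Iic x) := by
  refine Integrable.mono' (integrableOn_exp_Iic x)
    continuous_arctan_exp.aestronglyMeasurable (Filter.Eventually.of_forall fun u => ?_)
  rw [Real.norm_of_nonneg (Real.arctan_nonneg.2 (Real.exp_pos u).le)]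
  exact arctan_exp_le_exp u

theorem hasDerivAt_Fint (x : ℝ) : HasDerivAt Fint (Real.arctan (Real.exp x)) x := by
  have hF : Fint = fun y =>
      (∫ u in (0 : ℝ)..y, Real.arctan (Real.exp u)) + Fint 0 := by
    funext y
    rw [← intervalIntegral.integral_Iic_sub_Iic (integrableOn_arctan_exp_Iic 0)
      (integrableOn_arctan_exp_Iic y), integral_Iic_eq_integral_Iio,
      integral_Iic_eq_integral_Iio]
    simp [Fint]
  rw [hF]
  exact (continuous_arctan_exp.integral_hasStrictDerivAt 0 x).hasDerivAt.add_const _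

theorem arctan_exp_neg (x : ℝ) :
    Real.arctan (Real.exp (-x)) = Real.pi / 2 - Real.arctan (Real.exp x) := by
  rw [Real.exp_neg, Real.arctan_inv_of_pos (Real.exp_pos x)]

/-- The summand of the functional belonging to the pair `{j, k}`. -/
noncomputable def edgeTerm {V : Type*} (e : Sym2 V) (ρ : V → ℝ) : ℝ :=
  Sym2.lift ⟨fun j k =>
      Fint (ρ k - ρ j) + Fint (ρ j - ρ k) - Fint (ρ j + ρ k) - Fint (-ρ j - ρ k)
        - Real.pi * (ρ j + ρ k),
      fun j k => by ring_nf⟩ e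

/-- The contribution `arctan e^{ρ_k - ρ_j} + arctan e^{ρ_k + ρ_j}` of the neighbour `k` to half the
angle sum at `j`. -/
noncomputable def halfAngle {V : Type*} (ρ : V → ℝ) (j k : V) : ℝ :=
  Real.arctan (Real.exp (ρ k - ρ j)) + Real.arctan (Real.exp (ρ k + ρ j))

/-- The differential of an edge term. The formula is stated for every ordered representative
`(a, b)` of `e`, so that it can be read off with either end point first. -/
theorem exists_hasFDerivAt_edge {V : Type*} [Fintype V] (ρ : V → ℝ) (e : Sym2 V) :
    ∃ L : (V → ℝ) →L[ℝ] ℝ, HasFDerivAt (edgeTerm e) L ρ ∧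
      ∀ a b, e = s(a, b) → ∀ v,
        L v = -2 * (v a * halfAngle ρ a b + v b * halfAngle ρ b a) := by
  induction e using Sym2.ind with
  | _ j k =>
    have hj : HasFDerivAt (fun ρ : V → ℝ => ρ j) (ContinuousLinearMap.proj (R := ℝ) j) ρ :=
      hasFDerivAt_apply j ρ
    have hk : HasFDerivAt (fun ρ : V → ℝ => ρ k) (ContinuousLinearMap.proj (R := ℝ) k) ρ :=
      hasFDerivAt_apply k ρ
    have h1 := (hasDerivAt_Fint (ρ k - ρ j)).comp_hasFDerivAt ρ (hk.fun_sub hj)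
    have h2 := (hasDerivAt_Fint (ρ j - ρ k)).comp_hasFDerivAt ρ (hj.fun_sub hk)
    have h3 := (hasDerivAt_Fint (ρ j + ρ k)).comp_hasFDerivAt ρ (hj.fun_add hk)
    have h4 := (hasDerivAt_Fint (-ρ j - ρ k)).comp_hasFDerivAt ρ (hj.fun_neg.fun_sub hk)
    have h5 := (hj.fun_add hk).const_mul Real.pi
    have h := (((h1.fun_add h2).fun_sub h3).fun_sub h4).fun_sub h5
    refine ⟨_, h, fun a b hab v => ?_⟩
    have e1 : Real.arctan (Real.exp (ρ j - ρ k)) =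
        Real.pi / 2 - Real.arctan (Real.exp (ρ k - ρ j)) := by
      rw [← arctan_exp_neg, neg_sub]
    have e2 : Real.arctan (Real.exp (-ρ j - ρ k)) =
        Real.pi / 2 - Real.arctan (Real.exp (ρ j + ρ k)) := by
      rw [← arctan_exp_neg, neg_add']
    have e3 : ρ k + ρ j = ρ j + ρ k := add_comm _ _
    rcases Sym2.eq_iff.1 hab with ⟨rfl, rfl⟩ | ⟨rfl, rfl⟩ <;>
    · simp [halfAngle, e1, e2, e3]
      ring

/-- Sums over edges of a function supported on the edges at `j` are sums over neighbours of `j`. -/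
theorem sum_edgeFinset_eq_sum_neighborFinset {V : Type*} [Fintype V] [DecidableEq V]
    (G : SimpleGraph V) [DecidableRel G.Adj] (j : V) (f : Sym2 V → ℝ)
    (hf : ∀ e, j ∉ e → f e = 0) :
    ∑ e ∈ G.edgeFinset, f e = ∑ k ∈ G.neighborFinset j, f s(j, k) := by
  have himg : (G.neighborFinset j).image (fun k => s(j, k)) = {e ∈ G.edgeFinset | j ∈ e} := by
    ext e
    simp only [Finset.mem_image, Finset.mem_filter, SimpleGraph.mem_neighborFinset,
      SimpleGraph.mem_edgeFinset]
    constructor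
    · rintro ⟨k, hk, rfl⟩
      exact ⟨hk, Sym2.mem_mk_left j k⟩
    · rintro ⟨he, k, rfl⟩
      exact ⟨k, he, rfl⟩
  rw [← Finset.sum_image (g := fun k => s(j, k)) (f := f)
    (fun a _ b _ hab => Sym2.congr_right.1 hab), himg, Finset.sum_filter]
  refine Finset.sum_congr rfl fun e _ => ?_
  split_ifs with h
  · rfl
  · exact hf e h

/-- Differentiability of the functional together with its partial derivatives. -/
theorem exists_hasFDerivAt_circlePatternFunctional {V : Type*} [Fintype V] [DecidableEq V]
    (G : SimpleGraph V) [DecidableRel G.Adj] (Φ : V → ℝ) (ρ : V → ℝ) :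
    ∃ L : (V → ℝ) →L[ℝ] ℝ, HasFDerivAt (circlePatternFunctional G Φ) L ρ ∧
      ∀ j, L (Pi.single j 1) = Φ j - 2 * ∑ k ∈ G.neighborFinset j, halfAngle ρ j k := by
  choose L hL hLv using exists_hasFDerivAt_edge ρ
  have hlin : HasFDerivAt (fun ρ : V → ℝ => ∑ j, Φ j * ρ j)
      (∑ j, Φ j • ContinuousLinearMap.proj (R := ℝ) (φ := fun _ : V => ℝ) j) ρ :=
    HasFDerivAt.fun_sum fun j _ => (hasFDerivAt_apply j ρ).const_mul (Φ j)
  have hsum : HasFDerivAt (fun ρ : V → ℝ => ∑ e ∈ G.edgeFinset, edgeTerm e ρ)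
      (∑ e ∈ G.edgeFinset, L e) ρ :=
    HasFDerivAt.fun_sum fun e _ => hL e
  refine ⟨_, hsum.fun_add hlin, fun j => ?_⟩
  have hzero : ∀ e, j ∉ e → L e (Pi.single j 1) = 0 := by
    intro e he
    induction e using Sym2.ind with
    | _ a b =>
      rw [Sym2.mem_iff, not_or] at he
      rw [hLv _ a b rfl, Pi.single_eq_of_ne' he.1, Pi.single_eq_of_ne' he.2]
      ring
  have hedge : ∑ e ∈ G.edgeFinset, L e (Pi.single j 1) =
      -2 * ∑ k ∈ G.neighborFinset j, halfAngle ρ j k := by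
    rw [sum_edgeFinset_eq_sum_neighborFinset G j _ hzero, Finset.mul_sum]
    refine Finset.sum_congr rfl fun k hk => ?_
    have hne : j ≠ k := ((G.mem_neighborFinset j k).1 hk).ne
    rw [hLv _ j k rfl, Pi.single_eq_same, Pi.single_eq_of_ne' hne]
    ring
  have hpot : ∑ i, Φ i * (Pi.single j (1 : ℝ) : V → ℝ) i = Φ j := by
    simp [Pi.single_apply]
  simp only [add_apply, sum_apply,
    smul_apply, ContinuousLinearMap.proj_apply, smul_eq_mul, hedge, hpot]
  ring

/-- **Critical points of the spherical circle pattern functional.**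
The improper integral defining `F` converges, `S` is differentiable, its
partial derivative in the `j`-th coordinate direction is
`Φ j − 2 ∑_{k ~ j} (arctan e^{ρ_k−ρ_j} + arctan e^{ρ_k+ρ_j})`, and hence `ρ`
is a critical point of `S` iff the circle-pattern closure equations
`2 ∑_{k ~ j} (arctan e^{ρ_k−ρ_j} + arctan e^{ρ_k+ρ_j}) = Φ j` hold. -/
theorem circlePatternFunctional_deriv
    {V : Type*} [Fintype V] [DecidableEq V]
    (G : SimpleGraph V) [DecidableRel G.Adj] (Φ : V → ℝ) :
    (∀ x : ℝ, IntegrableOn (fun u => Real.arctan (Real.exp u)) (Set.Iio x)) ∧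
    Differentiable ℝ (circlePatternFunctional G Φ) ∧
    (∀ (ρ : V → ℝ) (j : V),
      fderiv ℝ (circlePatternFunctional G Φ) ρ (Pi.single j 1) =
        Φ j - 2 * ∑ k ∈ G.neighborFinset j,
          (Real.arctan (Real.exp (ρ k - ρ j)) + Real.arctan (Real.exp (ρ k + ρ j)))) ∧
    (∀ ρ : V → ℝ,
      fderiv ℝ (circlePatternFunctional G Φ) ρ = 0 ↔
      ∀ j : V, 2 * ∑ k ∈ G.neighborFinset j,
        (Real.arctan (Real.exp (ρ k - ρ j)) + Real.arctan (Real.exp (ρ k + ρ j))) = Φ j) := by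
  have hpartial : ∀ (ρ : V → ℝ) (j : V),
      fderiv ℝ (circlePatternFunctional G Φ) ρ (Pi.single j 1) =
        Φ j - 2 * ∑ k ∈ G.neighborFinset j,
          (Real.arctan (Real.exp (ρ k - ρ j)) + Real.arctan (Real.exp (ρ k + ρ j))) := by
    intro ρ j
    obtain ⟨L, hL, hLj⟩ := exists_hasFDerivAt_circlePatternFunctional G Φ ρ
    rw [hL.fderiv]
    exact hLj j
  refine ⟨fun x => (integrableOn_arctan_exp_Iic x).mono_set Set.Iio_subset_Iic_self,
    fun ρ => ?_, hpartial, fun ρ => ⟨fun h j => ?_, fun h => ?_⟩⟩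
  · obtain ⟨L, hL, -⟩ := exists_hasFDerivAt_circlePatternFunctional G Φ ρ
    exact hL.differentiableAt
  · have := hpartial ρ j
    rw [h, zero_apply] at this
    linarith
  · apply ContinuousLinearMap.coe_injective
    refine LinearMap.pi_ext' fun j => LinearMap.ext_ring ?_
    have := hpartial ρ j
    rw [h j, sub_self] at this
    simpa using this
end
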